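/- arXiv:0810.2132 — 2 statements merged into one kernel-verified Lean document; each statement's English description precedes it below -/
import Mathlib

section
/- Let 1 ≤ k ≤ n, suppose E_1, …, E_k have cotype 2, and let p_{k+1}, …, p_n ∈ [1,∞] be arbitrary. If p ≤ q and 1 ≤ q_i ≤ 2 for i = 1,…,k satisfy Σ_{i=1}^k 1/q_i − 1/q = k − 1/p, then for every Banach space F, a continuous n-linear map A : E_1 × ⋯ × E_n → F is absolutely (p;1,…,1,p_{k+1},…,p_n)-summing if and only if it is absolutely (q;q_1,…,q_k,p_{k+1},…,p_n)-summing. -/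
open scoped BigOperators NNReal ENNReal

/-- The Rademacher norm of a finite family `(x_j)_{j=1}^m` in a normed space:
`(2^{-m} ∑_{ε ∈ {-1,1}^m} ‖∑_j ε_j x_j‖²)^{1/2}`. -/
noncomputable def radNorm {E : Type*} [NormedAddCommGroup E] {m : ℕ} (x : Fin m → E) : ℝ :=
  ((∑ ε : Fin m → Bool, ‖∑ j, (if ε j then x j else -x j)‖ ^ 2) / (2 : ℝ) ^ m) ^ ((1 : ℝ) / 2)

/-- A Banach space has cotype 2. -/
def HasCotype2 (X : Type*) [NormedAddCommGroup X] : Prop :=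
  ∃ C > 0, ∀ (m : ℕ) (x : Fin m → X),
    (∑ j, ‖x j‖ ^ 2) ^ ((1 : ℝ) / 2) ≤ C * radNorm x

/-- The `ℓ_p` norm of a finite family, for an extended-real exponent `p ∈ (0, ∞]`
(with the sup-norm interpretation when `p = ∞`). -/
noncomputable def lpNormE {F : Type*} [NormedAddCommGroup F] (p : ℝ≥0∞) {m : ℕ}
    (y : Fin m → F) : ℝ :=
  if p = ∞ then ⨆ j, ‖y j‖ else (∑ j, ‖y j‖ ^ p.toReal) ^ (1 / p.toReal)

/-- The weak `ℓ_r` norm of a finite family, for an extended-real exponent `r ∈ (0, ∞]`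
(with the interpretation `max_j ‖x_j‖` when `r = ∞`). -/
noncomputable def weakNormE (𝕜 : Type*) [RCLike 𝕜] {E : Type*} [NormedAddCommGroup E]
    [NormedSpace 𝕜 E] (r : ℝ≥0∞) {m : ℕ} (x : Fin m → E) : ℝ :=
  if r = ∞ then ⨆ j, ‖x j‖
  else ⨆ φ : {φ : E →L[𝕜] 𝕜 // ‖φ‖ ≤ 1}, (∑ j, ‖φ.1 (x j)‖ ^ r.toReal) ^ (1 / r.toReal)

/-- A continuous multilinear map is absolutely `(p; p₁, …, pₙ)`-summing, for
extended-real exponents. -/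
def IsAbsSummingE {𝕜 : Type*} [RCLike 𝕜] {n : ℕ} {E : Fin n → Type*}
    [∀ i, NormedAddCommGroup (E i)] [∀ i, NormedSpace 𝕜 (E i)]
    {F : Type*} [NormedAddCommGroup F] [NormedSpace 𝕜 F]
    (p : ℝ≥0∞) (ps : Fin n → ℝ≥0∞) (A : ContinuousMultilinearMap 𝕜 E F) : Prop :=
  ∃ C > 0, ∀ (m : ℕ) (x : ∀ i, Fin m → E i),
    lpNormE p (fun j => A (fun i => x i j)) ≤ C * ∏ i, weakNormE 𝕜 (ps i) (x i)

/-! Hölder's inequality, applied to vectors rescaled by powers of `‖A x‖`, raises the weak exponents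
of `A` in exchange for a higher target exponent, whatever the spaces; this is one implication.

For the converse, every operator from `ℓ_∞^m` into a space `E` of cotype 2 is 2-summing, with a
constant independent of `m`. Indeed, suppose `K` bounds the square of the 2-summing norm of `u`.
Pietsch domination provides a probability weight `μ` with `‖u f‖² ≤ K ∑ μ j |f j|²`. Truncating a
Rademacher sum and estimating its large part by the fourth moment improves `K` to
`24 C² ‖u‖² + K / 2`, where `C` is the square of the cotype 2 constant; the least bound is therefore
at most `48 C² ‖u‖²`.

Applied to `f ↦ ∑ f j • x j`, the Pietsch weight factors a weakly summable family in `E` as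
`x j = μ j ^ (1 - 1/q) • y j` with `y` weakly `q`-summable, for `1 ≤ q ≤ 2`. Multilinearity pulls
the scalars out of `A`, and Hölder's inequality absorbs them into the target exponent. -/

section Rademacher

/-- The signed sum `∑ k, ε k • x k`, with the signs encoded as in `radNorm`: `true` is `+1` and
`false` is `-1`. -/
def signedSum {E : Type*} [AddCommGroup E] {N : ℕ} (ε : Fin N → Bool) (x : Fin N → E) : E :=
  ∑ k, if ε k then x k else -x k

lemma signedSum_cons {E : Type*} [AddCommGroup E] {N : ℕ} (b : Bool) (ε : Fin N → Bool)
    (x : Fin (N + 1) → E) :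
    signedSum (Fin.cons b ε : Fin (N + 1) → Bool) x =
      (if b then x 0 else -x 0) + signedSum ε (Fin.tail x) := by
  simp [signedSum, Fin.sum_univ_succ, Fin.tail]

lemma map_signedSum {E F 𝓕 : Type*} [AddCommGroup E] [AddCommGroup F] [FunLike 𝓕 E F]
    [AddMonoidHomClass 𝓕 E F] (u : 𝓕) {N : ℕ} (ε : Fin N → Bool) (x : Fin N → E) :
    u (signedSum ε x) = signedSum ε (u ∘ x) := by
  simp [signedSum, apply_ite u]

lemma signedSum_apply {ι E : Type*} [AddCommGroup E] {N : ℕ} (ε : Fin N → Bool)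
    (f : Fin N → ι → E) (j : ι) : signedSum ε f j = signedSum ε (fun k => f k j) := by
  simp [signedSum, Finset.sum_apply, apply_ite (fun g : ι → E => g j)]

lemma sum_bool_cons {M : Type*} [AddCommMonoid M] {N : ℕ} (g : (Fin (N + 1) → Bool) → M) :
    ∑ ε, g ε = ∑ ε : Fin N → Bool, (g (Fin.cons true ε) + g (Fin.cons false ε)) := by
  rw [← (Fin.consEquiv fun _ => Bool).sum_comp, Fintype.sum_prod_type]
  simp [Fin.consEquiv, Finset.sum_add_distrib]

lemma norm_add_sq_add_norm_neg_add_sq (𝕜 : Type*) [RCLike 𝕜] {H : Type*} [NormedAddCommGroup H]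
    [InnerProductSpace 𝕜 H] (a s : H) :
    ‖a + s‖ ^ 2 + ‖-a + s‖ ^ 2 = 2 * ‖a‖ ^ 2 + 2 * ‖s‖ ^ 2 := by
  have h := parallelogram_law_with_norm 𝕜 s a
  rw [add_comm a, neg_add_eq_sub]
  linarith

lemma norm_add_pow_four_add_norm_neg_add_pow_four_le (𝕜 : Type*) [RCLike 𝕜] {H : Type*}
    [NormedAddCommGroup H] [InnerProductSpace 𝕜 H] (a s : H) :
    ‖a + s‖ ^ 4 + ‖-a + s‖ ^ 4 ≤ 2 * ‖a‖ ^ 4 + 12 * ‖a‖ ^ 2 * ‖s‖ ^ 2 + 2 * ‖s‖ ^ 4 := by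
  have hsum := norm_add_sq_add_norm_neg_add_sq 𝕜 a s
  have hplus : ‖a + s‖ ^ 2 ≤ (‖a‖ + ‖s‖) ^ 2 := by gcongr; exact norm_add_le a s
  have hminus : ‖-a + s‖ ^ 2 ≤ (‖a‖ + ‖s‖) ^ 2 := by
    gcongr; simpa using norm_add_le (-a) s
  -- With `P + M` given by the parallelogram law, `P² + M²` is largest at the extreme values
  -- `(‖a‖ ± ‖s‖)²` of `P` and `M`.
  have hprod := mul_nonneg (sub_nonneg.2 hplus) (sub_nonneg.2 hminus)
  calc ‖a + s‖ ^ 4 + ‖-a + s‖ ^ 4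
      = (‖a + s‖ ^ 2 + ‖-a + s‖ ^ 2) ^ 2 - 2 * (‖a + s‖ ^ 2 * ‖-a + s‖ ^ 2) := by ring
    _ ≤ _ := by nlinarith

lemma sum_norm_signedSum_sq (𝕜 : Type*) [RCLike 𝕜] {H : Type*} [NormedAddCommGroup H]
    [InnerProductSpace 𝕜 H] {N : ℕ} (a : Fin N → H) :
    ∑ ε, ‖signedSum ε a‖ ^ 2 = 2 ^ N * ∑ k, ‖a k‖ ^ 2 := by
  induction N with
  | zero => simp [signedSum]
  | succ N ih =>
    simp only [sum_bool_cons, signedSum_cons, if_true, Bool.false_eq_true, if_false,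
      norm_add_sq_add_norm_neg_add_sq 𝕜 (a 0), Finset.sum_add_distrib, ← Finset.mul_sum, ih,
      Fin.sum_univ_succ (fun k => ‖a k‖ ^ 2), Fin.tail]
    simp only [Finset.sum_const, Finset.card_univ, Fintype.card_pi_const, Fintype.card_bool,
      nsmul_eq_mul, Nat.cast_pow, Nat.cast_ofNat]
    ring

lemma sum_norm_signedSum_pow_four_le (𝕜 : Type*) [RCLike 𝕜] {H : Type*} [NormedAddCommGroup H]
    [InnerProductSpace 𝕜 H] {N : ℕ} (a : Fin N → H) :
    ∑ ε, ‖signedSum ε a‖ ^ 4 ≤ 2 ^ N * (3 * (∑ k, ‖a k‖ ^ 2) ^ 2) := by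
  induction N with
  | zero => simp [signedSum]
  | succ N ih =>
    have htail := ih (Fin.tail a)
    calc ∑ ε, ‖signedSum ε a‖ ^ 4
        = ∑ ε : Fin N → Bool, (‖a 0 + signedSum ε (Fin.tail a)‖ ^ 4
            + ‖-a 0 + signedSum ε (Fin.tail a)‖ ^ 4) := by
          simp [sum_bool_cons, signedSum_cons]
      _ ≤ ∑ ε : Fin N → Bool, (2 * ‖a 0‖ ^ 4
            + 12 * ‖a 0‖ ^ 2 * ‖signedSum ε (Fin.tail a)‖ ^ 2
            + 2 * ‖signedSum ε (Fin.tail a)‖ ^ 4) := by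
          exact Finset.sum_le_sum fun ε _ =>
            norm_add_pow_four_add_norm_neg_add_pow_four_le 𝕜 _ _
      _ = 2 ^ N * (2 * ‖a 0‖ ^ 4 + 12 * ‖a 0‖ ^ 2 * ∑ k, ‖Fin.tail a k‖ ^ 2)
            + 2 * ∑ ε, ‖signedSum ε (Fin.tail a)‖ ^ 4 := by
          simp only [Finset.sum_add_distrib, ← Finset.mul_sum, sum_norm_signedSum_sq 𝕜 (Fin.tail a)]
          simp only [Finset.sum_const, Finset.card_univ, Fintype.card_pi_const, Fintype.card_bool,
            nsmul_eq_mul, Nat.cast_pow, Nat.cast_ofNat]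
          ring
      _ ≤ 2 ^ (N + 1) * (3 * (‖a 0‖ ^ 2 + ∑ k, ‖Fin.tail a k‖ ^ 2) ^ 2) := by
          have : (0 : ℝ) ≤ 2 ^ N * ‖a 0‖ ^ 4 := by positivity
          rw [pow_succ (2 : ℝ) N]
          nlinarith
      _ = _ := by simp only [Fin.sum_univ_succ, Fin.tail]

end Rademacher

section PietschDomination

lemma map_nonpos_of_forall_nonpos_map_le {V : Type*} [AddCommGroup V] [PartialOrder V]
    [Module ℝ V] [PosSMulMono ℝ V] (φ : V →ₗ[ℝ] ℝ) {b : ℝ} (hφ : ∀ v ≤ 0, φ v ≤ b) {v : V}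
    (hv : v ≤ 0) : φ v ≤ 0 := by
  by_contra! hpos
  have hb : 0 ≤ b := by simpa using hφ 0 le_rfl
  have h := hφ (((b + 1) / φ v) • v) (smul_nonpos_of_nonneg_of_nonpos (by positivity) hv)
  rw [map_smul, smul_eq_mul, div_mul_cancel₀ _ hpos.ne'] at h
  linarith

lemma exists_mem_stdSimplex_forall_sum_nonneg {ι : Type*} [Fintype ι] [Nonempty ι]
    {D : Set (ι → ℝ)} (hD : Convex ℝ D) (hD_nonneg : ∀ v ∈ D, ∃ j, 0 ≤ v j) :
    ∃ μ ∈ stdSimplex ℝ ι, ∀ v ∈ D, 0 ≤ ∑ j, μ j * v j := by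
  classical
  obtain rfl | ⟨d, hd⟩ := D.eq_empty_or_nonempty
  · exact ⟨_, single_mem_stdSimplex ℝ (Classical.arbitrary ι), by simp⟩
  set O : Set (ι → ℝ) := Set.univ.pi fun _ => Set.Iio 0 with hO
  have hdisj : Disjoint O D := Set.disjoint_left.2 fun v hvO hvD => by
    obtain ⟨j, hj⟩ := hD_nonneg v hvD
    exact (hvO j trivial).not_ge hj
  obtain ⟨φ, b, hφO, hφD⟩ := geometric_hahn_banach_open (convex_pi fun _ _ => convex_Iio 0)
    (isOpen_set_pi Set.finite_univ fun _ _ => isOpen_Iio) hD hdisj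
  have hφ_le : ∀ v : ι → ℝ, v ≤ 0 → φ v ≤ b := fun v hv =>
    closure_minimal (fun w hw => (hφO w hw).le) (isClosed_le φ.continuous continuous_const)
      (show v ∈ closure O by simpa [hO, closure_pi_set, Pi.le_def] using hv)
  have hb : 0 ≤ b := by simpa using hφ_le 0 le_rfl
  let c : ι → ℝ := fun j => φ (Pi.single j 1)
  have hφ_eq : ∀ v, φ v = ∑ j, c j * v j := fun v => by
    conv_lhs => rw [← (Pi.basisFun ℝ ι).sum_repr v]
    simp [c, mul_comm]
  have hc : ∀ j, 0 ≤ c j := fun j => by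
    simpa [c] using map_nonpos_of_forall_nonpos_map_le φ.toLinearMap hφ_le
      (v := -Pi.single j 1) (by simp)
  have hc_pos : 0 < ∑ j, c j := by
    have h : φ (-1) < φ d := (hφO _ fun _ _ => by simp).trans_le (hφD d hd)
    refine (Finset.sum_nonneg fun j _ => hc j).lt_of_ne' fun h0 => h.ne ?_
    have hc0 : ∀ j, c j = 0 := by
      simpa using (Finset.sum_eq_zero_iff_of_nonneg fun j _ => hc j).1 h0
    simp [hφ_eq, hc0]
  refine ⟨fun j => c j / ∑ i, c i, ⟨fun j => div_nonneg (hc j) hc_pos.le, ?_⟩, fun v hv => ?_⟩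
  · rw [← Finset.sum_div, div_self hc_pos.ne']
  · have h : ∑ j, c j / (∑ i, c i) * v j = φ v / ∑ i, c i := by
      simp only [hφ_eq, Finset.sum_div, div_mul_eq_mul_div]
    rw [h]
    exact div_nonneg (hb.trans (hφD v hv)) hc_pos.le

end PietschDomination

section TwoSumming

variable {𝕜 : Type*} [RCLike 𝕜] {E : Type*} [NormedAddCommGroup E] [NormedSpace 𝕜 E] {ι : Type*}

/-- `K` bounds the square of the 2-summing norm of the operator `u : ℓ_∞^ι → E`, for finite `ι`.
The weak `ℓ₂` norm of a family in `ℓ_∞^ι` is attained at a coordinate functional, whence the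
supremum over `ι`. -/
def IsTwoSummingBound (u : (ι → 𝕜) →L[𝕜] E) (K : ℝ) : Prop :=
  ∀ (N : ℕ) (f : Fin N → ι → 𝕜), ∑ k, ‖u (f k)‖ ^ 2 ≤ K * ⨆ j, ∑ k, ‖f k j‖ ^ 2

lemma IsTwoSummingBound.exists_isLeast {u : (ι → 𝕜) →L[𝕜] E} {K : ℝ} (hK : 0 ≤ K)
    (hu : IsTwoSummingBound u K) : ∃ K₀, IsLeast {K | 0 ≤ K ∧ IsTwoSummingBound u K} K₀ := by
  refine ⟨_, IsClosed.isLeast_csInf ?_ ⟨K, hK, hu⟩ ⟨0, fun K hK => hK.1⟩⟩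
  simp only [IsTwoSummingBound, Set.ofPred_and, Set.ofPred_forall]
  refine isClosed_Ici.inter (isClosed_iInter fun N => isClosed_iInter fun f => ?_)
  exact isClosed_le continuous_const (continuous_mul_const _)

variable [Fintype ι]

lemma IsTwoSummingBound.exists_pietsch_weight {u : (ι → 𝕜) →L[𝕜] E} {K : ℝ}
    (hu : IsTwoSummingBound u K) :
    ∃ μ : ι → ℝ, 0 ≤ μ ∧ ∑ j, μ j ≤ 1 ∧ ∀ f, ‖u f‖ ^ 2 ≤ K * ∑ j, μ j * ‖f j‖ ^ 2 := by
  obtain _ | _ := isEmpty_or_nonempty ι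
  · exact ⟨0, le_rfl, by simp, fun f => by simp [Subsingleton.elim f 0]⟩
  -- Sums of squares over concatenated families add up, so the defects form a convex set.
  let defect (N : ℕ) (f : Fin N → ι → 𝕜) (j : ι) : ℝ :=
    K * ∑ k, ‖f k j‖ ^ 2 - ∑ k, ‖u (f k)‖ ^ 2
  let D : Set (ι → ℝ) := {v | ∃ (N : ℕ) (f : Fin N → ι → 𝕜), defect N f = v}
  have hD : Convex ℝ D := by
    rintro _ ⟨N, f, rfl⟩ _ ⟨M, g, rfl⟩ a b ha hb -
    refine ⟨N + M, Fin.append (fun k => (√a : 𝕜) • f k) (fun k => (√b : 𝕜) • g k),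
      funext fun j => ?_⟩
    simp only [defect, Fin.sum_univ_add, Fin.append_left, Fin.append_right, Pi.smul_apply,
      Pi.add_apply, smul_eq_mul, map_smul, norm_smul, norm_mul, RCLike.norm_ofReal, mul_pow, sq_abs,
      Real.sq_sqrt ha, Real.sq_sqrt hb, ← Finset.mul_sum]
    ring
  have hD_nonneg : ∀ v ∈ D, ∃ j, 0 ≤ v j := by
    rintro _ ⟨N, f, rfl⟩
    obtain ⟨j, hj⟩ := exists_eq_ciSup_of_finite (f := fun j => ∑ k, ‖f k j‖ ^ 2)
    exact ⟨j, sub_nonneg.2 (hj ▸ hu N f)⟩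
  obtain ⟨μ, ⟨hμ, hμ_sum⟩, hμD⟩ := exists_mem_stdSimplex_forall_sum_nonneg hD hD_nonneg
  refine ⟨μ, hμ, hμ_sum.le, fun f => ?_⟩
  have h := hμD _ ⟨1, fun _ => f, rfl⟩
  simp only [defect, Fin.sum_univ_one, mul_sub, Finset.sum_sub_distrib, ← Finset.sum_mul, hμ_sum,
    one_mul, mul_left_comm _ K, ← Finset.mul_sum] at h
  exact sub_nonneg.1 h

lemma norm_apply_sq_le_of_pietsch_weight {u : (ι → 𝕜) →L[𝕜] E} {μ : ι → ℝ} {K s : ℝ}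
    (hK : 0 ≤ K) (hs : 0 < s) (hμ : 0 ≤ μ) (hu : ∀ f, ‖u f‖ ^ 2 ≤ K * ∑ j, μ j * ‖f j‖ ^ 2)
    (f : ι → 𝕜) :
    ‖u f‖ ^ 2 ≤ 2 * (‖u‖ ^ 2 * s) + 2 * (K * ((∑ j, μ j * ‖f j‖ ^ 4) / s)) := by
  -- The operator norm controls the bounded part of `f`; on the rest, `‖f j‖ ^ 2 ≤ ‖f j‖ ^ 4 / s`.
  let small : ι → 𝕜 := fun j => if ‖f j‖ ^ 2 ≤ s then f j else 0
  let large : ι → 𝕜 := fun j => if ‖f j‖ ^ 2 ≤ s then 0 else f j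
  have hf : f = small + large := by ext j; by_cases h : ‖f j‖ ^ 2 ≤ s <;> simp [small, large, h]
  have hsmall : ‖u small‖ ^ 2 ≤ ‖u‖ ^ 2 * s := by
    have h : ‖small‖ ≤ √s := (pi_norm_le_iff_of_nonneg (Real.sqrt_nonneg s)).2 fun j => by
      refine Real.le_sqrt_of_sq_le ?_
      by_cases h : ‖f j‖ ^ 2 ≤ s <;> simp [small, h, hs.le]
    calc ‖u small‖ ^ 2 ≤ (‖u‖ * √s) ^ 2 := by gcongr; exact u.le_opNorm_of_le h
      _ = ‖u‖ ^ 2 * s := by rw [mul_pow, Real.sq_sqrt hs.le]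
  have hlarge : ‖u large‖ ^ 2 ≤ K * ((∑ j, μ j * ‖f j‖ ^ 4) / s) := by
    refine (hu large).trans ?_
    rw [Finset.sum_div]
    refine mul_le_mul_of_nonneg_left (Finset.sum_le_sum fun j _ => ?_) hK
    rw [mul_div_assoc]
    refine mul_le_mul_of_nonneg_left ?_ (hμ j)
    by_cases h : ‖f j‖ ^ 2 ≤ s
    · simp only [large, h, if_true, norm_zero, ne_eq, OfNat.ofNat_ne_zero, not_false_eq_true,
        zero_pow]
      positivity
    · rw [le_div_iff₀ hs]
      simp only [large, h, if_false]
      nlinarith [sq_nonneg ‖f j‖]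
  calc ‖u f‖ ^ 2 ≤ (‖u small‖ + ‖u large‖) ^ 2 := by
        rw [hf, map_add]
        gcongr
        exact norm_add_le _ _
    _ ≤ 2 * (‖u small‖ ^ 2 + ‖u large‖ ^ 2) := add_sq_le
    _ ≤ _ := by linarith

lemma isTwoSummingBound_card_mul_norm_sq (u : (ι → 𝕜) →L[𝕜] E) :
    IsTwoSummingBound u (Fintype.card ι * ‖u‖ ^ 2) := by
  intro N f
  have hsq (k : Fin N) : ‖f k‖ ^ 2 ≤ ∑ j, ‖f k j‖ ^ 2 := by
    rw [← Real.le_sqrt (norm_nonneg _) (by positivity)]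
    refine (pi_norm_le_iff_of_nonneg (Real.sqrt_nonneg _)).2 fun j => Real.le_sqrt_of_sq_le ?_
    exact Finset.single_le_sum (f := fun j => ‖f k j‖ ^ 2) (fun _ _ => by positivity)
      (Finset.mem_univ j)
  calc ∑ k, ‖u (f k)‖ ^ 2 ≤ ∑ k, ‖u‖ ^ 2 * ∑ j, ‖f k j‖ ^ 2 := by
        gcongr with k
        calc ‖u (f k)‖ ^ 2 ≤ (‖u‖ * ‖f k‖) ^ 2 := by gcongr; exact u.le_opNorm _
          _ ≤ ‖u‖ ^ 2 * ∑ j, ‖f k j‖ ^ 2 := by rw [mul_pow]; gcongr; exact hsq k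
    _ = ‖u‖ ^ 2 * ∑ j, ∑ k, ‖f k j‖ ^ 2 := by rw [← Finset.mul_sum, Finset.sum_comm]
    _ ≤ ‖u‖ ^ 2 * ∑ _j : ι, ⨆ j, ∑ k, ‖f k j‖ ^ 2 := by
        gcongr with j
        exact le_ciSup (f := fun j => ∑ k, ‖f k j‖ ^ 2) (Set.finite_range _).bddAbove j
    _ = _ := by
        rw [Finset.sum_const, Finset.card_univ, nsmul_eq_mul]
        ring

end TwoSumming

section CotypeTwo

/-- `C` bounds the square of the cotype 2 constant of `E`. -/
def IsCotypeTwoBound (E : Type*) [NormedAddCommGroup E] (C : ℝ) : Prop :=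
  ∀ (N : ℕ) (y : Fin N → E), ∑ k, ‖y k‖ ^ 2 ≤ C * ((∑ ε, ‖signedSum ε y‖ ^ 2) / 2 ^ N)

lemma HasCotype2.exists_isCotypeTwoBound {E : Type*} [NormedAddCommGroup E] (hE : HasCotype2 E) :
    ∃ C > 0, IsCotypeTwoBound E C := by
  obtain ⟨C, hC, h⟩ := hE
  refine ⟨C ^ 2, by positivity, fun N y => ?_⟩
  have hNy := h N y
  rw [radNorm, ← Real.sqrt_eq_rpow, ← Real.sqrt_eq_rpow] at hNy
  calc ∑ k, ‖y k‖ ^ 2 = √(∑ k, ‖y k‖ ^ 2) ^ 2 := (Real.sq_sqrt (by positivity)).symm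
    _ ≤ (C * √((∑ ε, ‖signedSum ε y‖ ^ 2) / 2 ^ N)) ^ 2 := by gcongr; exact hNy
    _ = _ := by rw [mul_pow, Real.sq_sqrt (by positivity)]

variable {𝕜 : Type*} [RCLike 𝕜] {E : Type*} [NormedAddCommGroup E] [NormedSpace 𝕜 E]
  {ι : Type*} [Fintype ι]

lemma sum_sum_mul_norm_signedSum_pow_four_le {μ : ι → ℝ} (hμ : 0 ≤ μ) (hμ_sum : ∑ j, μ j ≤ 1)
    {N : ℕ} (f : Fin N → ι → 𝕜) {R : ℝ} (hR : ∀ j, ∑ k, ‖f k j‖ ^ 2 ≤ R) :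
    ∑ ε, ∑ j, μ j * ‖signedSum ε f j‖ ^ 4 ≤ 2 ^ N * (3 * R ^ 2) := by
  calc ∑ ε, ∑ j, μ j * ‖signedSum ε f j‖ ^ 4
      = ∑ j, μ j * ∑ ε, ‖signedSum ε fun k => f k j‖ ^ 4 := by
        rw [Finset.sum_comm]
        simp only [Finset.mul_sum, signedSum_apply]
    _ ≤ ∑ j, μ j * (2 ^ N * (3 * R ^ 2)) := by
        refine Finset.sum_le_sum fun j _ => mul_le_mul_of_nonneg_left ?_ (hμ j)
        refine (sum_norm_signedSum_pow_four_le 𝕜 _).trans ?_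
        gcongr
        exact hR j
    _ = (∑ j, μ j) * (2 ^ N * (3 * R ^ 2)) := by rw [Finset.sum_mul]
    _ ≤ 2 ^ N * (3 * R ^ 2) := mul_le_of_le_one_left (by positivity) hμ_sum

lemma sum_norm_map_signedSum_sq_div_le {u : (ι → 𝕜) →L[𝕜] E} {μ : ι → ℝ} {K R s : ℝ}
    (hK : 0 ≤ K) (hs : 0 < s) (hμ : 0 ≤ μ) (hμ_sum : ∑ j, μ j ≤ 1)
    (hu : ∀ f, ‖u f‖ ^ 2 ≤ K * ∑ j, μ j * ‖f j‖ ^ 2) {N : ℕ} (f : Fin N → ι → 𝕜)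
    (hR : ∀ j, ∑ k, ‖f k j‖ ^ 2 ≤ R) :
    (∑ ε, ‖u (signedSum ε f)‖ ^ 2) / 2 ^ N ≤
      2 * (‖u‖ ^ 2 * s) + 2 * (K * (3 * R ^ 2 / s)) := by
  calc (∑ ε, ‖u (signedSum ε f)‖ ^ 2) / 2 ^ N
      ≤ (∑ ε : Fin N → Bool, (2 * (‖u‖ ^ 2 * s)
          + 2 * (K * ((∑ j, μ j * ‖signedSum ε f j‖ ^ 4) / s)))) / 2 ^ N := by
        gcongr with ε
        exact norm_apply_sq_le_of_pietsch_weight hK hs hμ hu _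
    _ = 2 * (‖u‖ ^ 2 * s)
          + 2 * (K * ((∑ ε, ∑ j, μ j * ‖signedSum ε f j‖ ^ 4) / 2 ^ N / s)) := by
        simp only [Finset.sum_add_distrib, ← Finset.mul_sum, ← Finset.sum_div, Finset.sum_const,
          Finset.card_univ, Fintype.card_pi_const, Fintype.card_bool, nsmul_eq_mul, Nat.cast_pow,
          Nat.cast_ofNat]
        field_simp
    _ ≤ 2 * (‖u‖ ^ 2 * s) + 2 * (K * (3 * R ^ 2 / s)) := by
        gcongr
        rw [div_le_iff₀' (by positivity)]
        exact sum_sum_mul_norm_signedSum_pow_four_le hμ hμ_sum f hR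

lemma IsTwoSummingBound.improve {C K : ℝ} (hC : 0 < C) (hE : IsCotypeTwoBound E C)
    {u : (ι → 𝕜) →L[𝕜] E} (hK : 0 ≤ K) (hu : IsTwoSummingBound u K) :
    IsTwoSummingBound u (24 * C ^ 2 * ‖u‖ ^ 2 + K / 2) := by
  intro N f
  obtain ⟨μ, hμ, hμ_sum, hμu⟩ := hu.exists_pietsch_weight
  set R := ⨆ j, ∑ k, ‖f k j‖ ^ 2
  have hR_le (j : ι) : ∑ k, ‖f k j‖ ^ 2 ≤ R :=
    le_ciSup (f := fun j => ∑ k, ‖f k j‖ ^ 2) (Set.finite_range _).bddAbove j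
  obtain hR | hR := (Real.iSup_nonneg fun j => by positivity : 0 ≤ R).eq_or_lt
  · have hf : ∀ k, f k = 0 := fun k => funext fun j => by
      have h := (Finset.sum_eq_zero_iff_of_nonneg fun k _ => by positivity).1
        (le_antisymm ((hR_le j).trans_eq hR.symm) (by positivity)) k (Finset.mem_univ k)
      simpa using h
    simp [hf, R]
  calc ∑ k, ‖u (f k)‖ ^ 2
      ≤ C * ((∑ ε, ‖u (signedSum ε f)‖ ^ 2) / 2 ^ N) := by
        simpa only [map_signedSum, Function.comp_apply] using hE N (u ∘ f)
    -- The truncation level `12 * C * R` makes the coefficient of `K` equal to `1 / 2`.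
    _ ≤ C * (2 * (‖u‖ ^ 2 * (12 * C * R)) + 2 * (K * (3 * R ^ 2 / (12 * C * R)))) := by
        gcongr
        exact sum_norm_map_signedSum_sq_div_le hK (by positivity) hμ hμ_sum hμu f hR_le
    _ = (24 * C ^ 2 * ‖u‖ ^ 2 + K / 2) * R := by
        field_simp
        ring

lemma IsCotypeTwoBound.isTwoSummingBound {C : ℝ} (hC : 0 < C) (hE : IsCotypeTwoBound E C)
    (u : (ι → 𝕜) →L[𝕜] E) : IsTwoSummingBound u (48 * C ^ 2 * ‖u‖ ^ 2) := by
  obtain ⟨K, ⟨hK, hu⟩, hK_le⟩ :=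
    (isTwoSummingBound_card_mul_norm_sq u).exists_isLeast (by positivity)
  have h := hK_le ⟨by positivity, hu.improve hC hE hK⟩
  intro N f
  refine (hu N f).trans (mul_le_mul_of_nonneg_right ?_ (Real.iSup_nonneg fun j => by positivity))
  linarith

end CotypeTwo

section Norms

variable {F : Type*} [NormedAddCommGroup F] {m : ℕ}

lemma lpNormE_nonneg (p : ℝ≥0∞) (y : Fin m → F) : 0 ≤ lpNormE p y := by
  unfold lpNormE
  split_ifs
  · exact Real.iSup_nonneg fun j => norm_nonneg _
  · positivity

lemma lpNormE_mono {G : Type*} [NormedAddCommGroup G] (p : ℝ≥0∞) {y : Fin m → F} {z : Fin m → G}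
    (h : ∀ j, ‖y j‖ ≤ ‖z j‖) : lpNormE p y ≤ lpNormE p z := by
  unfold lpNormE
  split_ifs
  · exact ciSup_mono (Set.finite_range _).bddAbove h
  · gcongr with j
    exact h j

lemma sum_rpow_inv_mul_rpow_le {a b : Fin m → ℝ} (ha : 0 ≤ a) (hb : 0 ≤ b) {r M : ℝ} (hr : 0 < r)
    (hM : ∀ j, b j ≤ M) :
    ∑ j, (a j ^ r⁻¹ * b j) ^ r ≤ ((∑ j, a j) ^ r⁻¹ * M) ^ r := by
  obtain _ | ⟨⟨j₀⟩⟩ := isEmpty_or_nonempty (Fin m)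
  · simp [hr.ne']
  have hM_nonneg : 0 ≤ M := (hb j₀).trans (hM j₀)
  calc ∑ j, (a j ^ r⁻¹ * b j) ^ r = ∑ j, a j * b j ^ r := by
        refine Finset.sum_congr rfl fun j _ => ?_
        rw [Real.mul_rpow (Real.rpow_nonneg (ha j) _) (hb j), Real.rpow_inv_rpow (ha j) hr.ne']
    _ ≤ ∑ j, a j * M ^ r := by
        refine Finset.sum_le_sum fun j _ => mul_le_mul_of_nonneg_left ?_ (ha j)
        exact Real.rpow_le_rpow (hb j) (hM j) hr.le
    _ = ((∑ j, a j) ^ r⁻¹ * M) ^ r := by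
        have hsum : 0 ≤ ∑ j, a j := Finset.sum_nonneg fun j _ => ha j
        rw [Real.mul_rpow (by positivity) hM_nonneg, Real.rpow_inv_rpow hsum hr.ne',
          Finset.sum_mul]

lemma sum_rpow_mul_rpow_le {a b : Fin m → ℝ} (ha : 0 ≤ a) (hb : 0 ≤ b) {r s : ℝ} (hr : 0 < r)
    (hrs : r < s) :
    ∑ j, (a j ^ (r⁻¹ - s⁻¹) * b j) ^ r ≤
      ((∑ j, a j) ^ (r⁻¹ - s⁻¹) * (∑ j, b j ^ s) ^ s⁻¹) ^ r := by
  have hθ : 0 < r⁻¹ - s⁻¹ := sub_pos.2 (inv_strictAnti₀ hr hrs)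
  have hsum : 0 ≤ ∑ j, a j := Finset.sum_nonneg fun j _ => ha j
  have hsum_rpow : 0 ≤ ∑ j, b j ^ s := Finset.sum_nonneg fun j _ => Real.rpow_nonneg (hb j) _
  have h := Real.Lr_rpow_le_Lp_mul_Lq_of_nonneg Finset.univ (f := fun j => a j ^ (r⁻¹ - s⁻¹))
    (g := b) (⟨by simp, inv_pos.2 hθ, hr.trans hrs⟩ : Real.HolderTriple (r⁻¹ - s⁻¹)⁻¹ s r)
    (fun j _ => Real.rpow_nonneg (ha j) _) (fun j _ => hb j)
  simp only [Real.rpow_rpow_inv (ha _) hθ.ne', div_inv_eq_mul] at h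
  rwa [Real.mul_rpow (by positivity) (by positivity), ← Real.rpow_mul hsum,
    ← Real.rpow_mul hsum_rpow, mul_comm _ r, mul_comm _ r, ← div_eq_mul_inv]

lemma lpNormE_rpow_smul_le {𝕜 : Type*} [RCLike 𝕜] [NormedSpace 𝕜 F] {r s : ℝ≥0∞} (hr : r ≠ 0)
    (hrs : r ≤ s) {a : Fin m → ℝ} (ha : 0 ≤ a) (y : Fin m → F) :
    lpNormE r (fun j => ((a j ^ (r⁻¹.toReal - s⁻¹.toReal) : ℝ) : 𝕜) • y j) ≤
      (∑ j, a j) ^ (r⁻¹.toReal - s⁻¹.toReal) * lpNormE s y := by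
  obtain rfl | hlt := hrs.eq_or_lt
  · simp
  have hr_top : r ≠ ∞ := hlt.ne_top
  have hr_pos : 0 < r.toReal := ENNReal.toReal_pos hr hr_top
  have hsum : 0 ≤ ∑ j, a j := Finset.sum_nonneg fun j _ => ha j
  have hnorm (θ : ℝ) (j : Fin m) : ‖((a j ^ θ : ℝ) : 𝕜) • y j‖ = a j ^ θ * ‖y j‖ := by
    rw [norm_smul, RCLike.norm_ofReal, abs_of_nonneg (Real.rpow_nonneg (ha j) _)]
  rw [lpNormE, if_neg hr_top, one_div]
  refine (Real.rpow_inv_le_iff_of_pos (by positivity)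
    (mul_nonneg (by positivity) (lpNormE_nonneg s y)) hr_pos).2 ?_
  simp only [hnorm, ENNReal.toReal_inv, lpNormE, one_div]
  split_ifs with hs
  · subst hs
    simpa using sum_rpow_inv_mul_rpow_le ha (fun j => norm_nonneg (y j)) hr_pos
      (le_ciSup (Set.finite_range fun j => ‖y j‖).bddAbove)
  · exact sum_rpow_mul_rpow_le ha (fun j => norm_nonneg (y j)) hr_pos
      ((ENNReal.toReal_lt_toReal hr_top hs).2 hlt)

variable {𝕜 : Type*} [RCLike 𝕜] {E : Type*} [NormedAddCommGroup E] [NormedSpace 𝕜 E]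

lemma lpNormE_le_weakNormE (r : ℝ≥0∞) (x : Fin m → E) {φ : E →L[𝕜] 𝕜} (hφ : ‖φ‖ ≤ 1) :
    lpNormE r (fun j => φ (x j)) ≤ weakNormE 𝕜 r x := by
  have hφx (ψ : E →L[𝕜] 𝕜) (hψ : ‖ψ‖ ≤ 1) : lpNormE r (fun j => ψ (x j)) ≤ lpNormE r x :=
    lpNormE_mono r fun j => ψ.le_of_opNorm_le_of_le hψ le_rfl |>.trans_eq (one_mul _)
  by_cases hr : r = ∞
  · simpa only [weakNormE, lpNormE, hr, if_true] using hφx φ hφ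
  · simp only [lpNormE, weakNormE, hr, if_false] at hφx ⊢
    exact le_ciSup (f := fun φ : {φ : E →L[𝕜] 𝕜 // ‖φ‖ ≤ 1} =>
      (∑ j, ‖φ.1 (x j)‖ ^ r.toReal) ^ (1 / r.toReal)) ⟨_, Set.forall_mem_range.2 fun ψ =>
        hφx ψ.1 ψ.2⟩ ⟨φ, hφ⟩

lemma weakNormE_le {r : ℝ≥0∞} {x : Fin m → E} {M : ℝ}
    (hM : ∀ φ : E →L[𝕜] 𝕜, ‖φ‖ ≤ 1 → lpNormE r (fun j => φ (x j)) ≤ M) :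
    weakNormE 𝕜 r x ≤ M := by
  have hM_nonneg : 0 ≤ M := (lpNormE_nonneg r _).trans (hM 0 (by simp))
  by_cases hr : r = ∞
  · simp only [weakNormE, lpNormE, hr, if_true] at hM ⊢
    refine Real.iSup_le (fun j => ?_) hM_nonneg
    obtain ⟨φ, hφ, hφx⟩ := exists_dual_vector'' 𝕜 (x j)
    calc ‖x j‖ = ‖φ (x j)‖ := by simp [hφx]
      _ ≤ ⨆ i, ‖φ (x i)‖ := le_ciSup (Set.finite_range fun i => ‖φ (x i)‖).bddAbove j
      _ ≤ M := hM φ hφ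
  · simp only [weakNormE, lpNormE, hr, if_false] at hM ⊢
    exact Real.iSup_le (fun φ => hM φ.1 φ.2) hM_nonneg

lemma weakNormE_nonneg (r : ℝ≥0∞) (x : Fin m → E) : 0 ≤ weakNormE 𝕜 r x :=
  (lpNormE_nonneg r _).trans (lpNormE_le_weakNormE r x (φ := 0) (by simp))

lemma weakNormE_rpow_smul_le {r s : ℝ≥0∞} (hr : r ≠ 0) (hrs : r ≤ s) {a : Fin m → ℝ} (ha : 0 ≤ a)
    (x : Fin m → E) :
    weakNormE 𝕜 r (fun j => ((a j ^ (r⁻¹.toReal - s⁻¹.toReal) : ℝ) : 𝕜) • x j) ≤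
      (∑ j, a j) ^ (r⁻¹.toReal - s⁻¹.toReal) * weakNormE 𝕜 s x := by
  refine weakNormE_le fun φ hφ => ?_
  have hsum : 0 ≤ ∑ j, a j := Finset.sum_nonneg fun j _ => ha j
  simp only [map_smul]
  refine (lpNormE_rpow_smul_le hr hrs ha _).trans ?_
  gcongr
  exact lpNormE_le_weakNormE s x hφ

end Norms

section WeakFactorization

/-- Every weakly `r`-summable finite family `x` in `E` factors as `x j = μ j ^ θ • y j`, where `y`
is weakly `s`-summable with comparable norm and `μ` is a subprobability weight. In the notation of
Arregui and Blasco this is `ℓ_r^w(E) = ℓ_{1/θ} · ℓ_s^w(E)`. -/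
def WeakFactorization (𝕜 : Type*) [RCLike 𝕜] (E : Type*) [NormedAddCommGroup E] [NormedSpace 𝕜 E]
    (θ : ℝ) (r s : ℝ≥0∞) : Prop :=
  ∃ K > 0, ∀ (m : ℕ) (x : Fin m → E), ∃ (μ : Fin m → ℝ) (y : Fin m → E), 0 ≤ μ ∧ ∑ j, μ j ≤ 1 ∧
    (∀ j, x j = ((μ j ^ θ : ℝ) : 𝕜) • y j) ∧ weakNormE 𝕜 s y ≤ K * weakNormE 𝕜 r x

variable {𝕜 : Type*} [RCLike 𝕜] {E : Type*} [NormedAddCommGroup E] [NormedSpace 𝕜 E]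

lemma WeakFactorization.refl (r : ℝ≥0∞) : WeakFactorization 𝕜 E 0 r r :=
  ⟨1, one_pos, fun m x => ⟨0, x, le_rfl, by simp, by simp, by simp⟩⟩

lemma WeakFactorization.of_le {θ : ℝ} {r s t : ℝ≥0∞} (hθ : 0 ≤ θ) (ht : t ≠ 0) (hts : t ≤ s)
    (h : WeakFactorization 𝕜 E (θ + (t⁻¹.toReal - s⁻¹.toReal)) r s) :
    WeakFactorization 𝕜 E θ r t := by
  have hδ : 0 ≤ t⁻¹.toReal - s⁻¹.toReal :=
    sub_nonneg.2 (ENNReal.toReal_mono (ENNReal.inv_ne_top.2 ht) (ENNReal.inv_le_inv.2 hts))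
  obtain ⟨K, hK, h⟩ := h
  refine ⟨K, hK, fun m x => ?_⟩
  obtain ⟨μ, y, hμ, hμ_sum, hxy, hy⟩ := h m x
  have hμ_sum_nonneg : 0 ≤ ∑ j, μ j := Finset.sum_nonneg fun j _ => hμ j
  refine ⟨μ, fun j => ((μ j ^ (t⁻¹.toReal - s⁻¹.toReal) : ℝ) : 𝕜) • y j, hμ, hμ_sum,
    fun j => ?_, ?_⟩
  · rw [hxy, smul_smul, Real.rpow_add_of_nonneg (hμ j) hθ hδ, RCLike.ofReal_mul]
  · calc weakNormE 𝕜 t (fun j => ((μ j ^ (t⁻¹.toReal - s⁻¹.toReal) : ℝ) : 𝕜) • y j)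
        ≤ (∑ j, μ j) ^ (t⁻¹.toReal - s⁻¹.toReal) * weakNormE 𝕜 s y :=
          weakNormE_rpow_smul_le ht hts hμ y
      _ ≤ weakNormE 𝕜 s y :=
          mul_le_of_le_one_left (weakNormE_nonneg s y) (Real.rpow_le_one hμ_sum_nonneg hμ_sum hδ)
      _ ≤ K * weakNormE 𝕜 r x := hy

variable {m : ℕ}

lemma norm_sum_smul_le_weakNormE_one (f : Fin m → 𝕜) (x : Fin m → E) :
    ‖∑ j, f j • x j‖ ≤ weakNormE 𝕜 1 x * ‖f‖ := by
  obtain ⟨φ, hφ, hφ_eq⟩ := exists_dual_vector'' 𝕜 (∑ j, f j • x j)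
  have hφx : ∑ j, ‖φ (x j)‖ ≤ weakNormE 𝕜 1 x := by
    simpa [lpNormE] using lpNormE_le_weakNormE 1 x hφ
  calc ‖∑ j, f j • x j‖ = ‖φ (∑ j, f j • x j)‖ := by simp [hφ_eq]
    _ = ‖∑ j, f j * φ (x j)‖ := by simp only [map_sum, map_smul, smul_eq_mul]
    _ ≤ ∑ j, ‖f j‖ * ‖φ (x j)‖ := norm_sum_le_of_le _ fun j _ => norm_mul_le _ _
    _ ≤ ∑ j, ‖f‖ * ‖φ (x j)‖ := by gcongr with j; exact norm_le_pi_norm f j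
    _ = (∑ j, ‖φ (x j)‖) * ‖f‖ := by rw [← Finset.mul_sum, mul_comm]
    _ ≤ weakNormE 𝕜 1 x * ‖f‖ := by gcongr

lemma weakNormE_two_le_of_pietsch_weight {x : Fin m → E} {μ : Fin m → ℝ} {K : ℝ} (hμ : 0 ≤ μ)
    (hx : ∀ f : Fin m → 𝕜, ‖∑ j, f j • x j‖ ^ 2 ≤ K * ∑ j, μ j * ‖f j‖ ^ 2) :
    weakNormE 𝕜 2 (fun j => ((√(μ j))⁻¹ : 𝕜) • x j) ≤ √K := by
  refine weakNormE_le fun φ hφ => ?_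
  set S := ∑ j, ‖φ (x j)‖ ^ 2 / μ j with hS
  have hS_nonneg : 0 ≤ S := Finset.sum_nonneg fun j _ => div_nonneg (by positivity) (hμ j)
  have hnorm : lpNormE 2 (fun j => φ (((√(μ j))⁻¹ : 𝕜) • x j)) = √S := by
    rw [lpNormE, if_neg ENNReal.ofNat_ne_top, Real.sqrt_eq_rpow, hS]
    simp [mul_pow, Real.sq_sqrt (hμ _), div_eq_inv_mul]
  rw [hnorm]
  obtain hS_zero | hS_pos := hS_nonneg.eq_or_lt
  · simp [← hS_zero]
  -- `f` is extremal in Cauchy–Schwarz for `φ ∘ x`; the junk value `0` at `μ j = 0` is harmless.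
  let f : Fin m → 𝕜 := fun j => starRingEnd 𝕜 (φ (x j)) / μ j
  have hφf : φ (∑ j, f j • x j) = (S : 𝕜) := by
    simp [f, hS, div_mul_eq_mul_div, RCLike.conj_mul]
  have hSf : ∑ j, μ j * ‖f j‖ ^ 2 = S := by
    refine Finset.sum_congr rfl fun j _ => ?_
    rw [norm_div, RCLike.norm_conj, RCLike.norm_ofReal, div_pow, sq_abs]
    obtain hj | hj := eq_or_ne (μ j) 0
    · simp [hj]
    · field_simp
  have hS_sq : S ^ 2 ≤ K * S := by
    calc S ^ 2 = ‖φ (∑ j, f j • x j)‖ ^ 2 := by rw [hφf, RCLike.norm_ofReal, sq_abs]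
      _ ≤ ‖∑ j, f j • x j‖ ^ 2 := by
        gcongr
        exact (φ.le_of_opNorm_le hφ _).trans_eq (one_mul _)
      _ ≤ K * S := hSf ▸ hx f
  exact Real.sqrt_le_sqrt (le_of_mul_le_mul_right (by rwa [← sq]) hS_pos)

lemma HasCotype2.weakFactorization_half (hE : HasCotype2 E) :
    WeakFactorization 𝕜 E (1 / 2) 1 2 := by
  obtain ⟨C, hC, hE⟩ := hE.exists_isCotypeTwoBound
  refine ⟨7 * C, by positivity, fun m x => ?_⟩
  let u : (Fin m → 𝕜) →L[𝕜] E := (Fintype.linearCombination 𝕜 x).toContinuousLinearMap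
  have hu (f : Fin m → 𝕜) : u f = ∑ j, f j • x j := Fintype.linearCombination_apply ..
  have hu_norm : ‖u‖ ≤ weakNormE 𝕜 1 x := u.opNorm_le_bound (weakNormE_nonneg 1 x) fun f =>
    hu f ▸ norm_sum_smul_le_weakNormE_one f x
  obtain ⟨μ, hμ, hμ_sum, hμu⟩ := (hE.isTwoSummingBound hC u).exists_pietsch_weight
  simp only [hu] at hμu
  refine ⟨μ, fun j => ((√(μ j))⁻¹ : 𝕜) • x j, hμ, hμ_sum, fun j => ?_, ?_⟩
  · obtain hj | hj := (hμ j).eq_or_lt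
    · have hxj : ‖x j‖ ^ 2 ≤ 0 := by
        simpa [Pi.single_apply, apply_ite norm, ite_pow, ← hj] using hμu (Pi.single j 1)
      have hxj_zero : x j = 0 := by simpa using hxj.antisymm (by positivity)
      simp [hxj_zero]
    · rw [smul_smul, ← Real.sqrt_eq_rpow, mul_inv_cancel₀, one_smul]
      exact_mod_cast (Real.sqrt_pos.2 hj).ne'
  · refine (weakNormE_two_le_of_pietsch_weight hμ hμu).trans (Real.sqrt_le_iff.2 ⟨?_, ?_⟩)
    · have := weakNormE_nonneg (𝕜 := 𝕜) 1 x
      positivity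
    · calc 48 * C ^ 2 * ‖u‖ ^ 2 ≤ 49 * C ^ 2 * weakNormE 𝕜 1 x ^ 2 := by gcongr; norm_num
        _ = (7 * C * weakNormE 𝕜 1 x) ^ 2 := by ring

lemma HasCotype2.weakFactorization (hE : HasCotype2 E) {q : ℝ} (hq₁ : 1 ≤ q) (hq₂ : q ≤ 2) :
    WeakFactorization 𝕜 E (1 - 1 / q) 1 (ENNReal.ofReal q) := by
  have hq : 0 < q := one_pos.trans_le hq₁
  refine .of_le (s := 2) (sub_nonneg.2 ((div_le_one hq).2 hq₁)) (by simpa) ?_ ?_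
  · simpa using ENNReal.ofReal_le_ofReal hq₂
  · convert hE.weakFactorization_half using 1
    simp only [one_div, ENNReal.toReal_inv, hq.le, ENNReal.toReal_ofReal, ENNReal.toReal_ofNat,
      sub_add_sub_cancel]
    ring

end WeakFactorization

section AbsSumming

lemma exists_weight_prod_rpow_le {ι κ : Type*} [Fintype ι] [Fintype κ] {θ : ι → ℝ} (hθ : 0 ≤ θ)
    {μ : ι → κ → ℝ} (hμ : ∀ i, 0 ≤ μ i) (hμ_sum : ∀ i, ∑ j, μ i j ≤ 1) :
    ∃ ν : κ → ℝ, 0 ≤ ν ∧ ∑ j, ν j ≤ 1 ∧ ∀ j, ∏ i, μ i j ^ θ i ≤ ν j ^ ∑ i, θ i := by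
  have hθ_sum : 0 ≤ ∑ i, θ i := Finset.sum_nonneg fun i _ => hθ i
  obtain h0 | hpos := hθ_sum.eq_or_lt
  · have hθ_zero : ∀ i, θ i = 0 := by
      simpa using (Finset.sum_eq_zero_iff_of_nonneg fun i _ => hθ i).1 h0.symm
    exact ⟨0, le_rfl, by simp, by simp [hθ_zero]⟩
  have hw (i : ι) : 0 ≤ θ i / ∑ i, θ i := div_nonneg (hθ i) hpos.le
  have hw_sum : ∑ i, θ i / ∑ i, θ i = 1 := by rw [← Finset.sum_div, div_self hpos.ne']
  refine ⟨fun j => ∑ i, (θ i / ∑ i, θ i) * μ i j,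
    fun j => Finset.sum_nonneg fun i _ => mul_nonneg (hw i) (hμ i j), ?_, fun j => ?_⟩
  · calc ∑ j, ∑ i, (θ i / ∑ i, θ i) * μ i j = ∑ i, (θ i / ∑ i, θ i) * ∑ j, μ i j := by
          simp only [Finset.mul_sum]
          exact Finset.sum_comm
      _ ≤ ∑ i, θ i / ∑ i, θ i :=
          Finset.sum_le_sum fun i _ => mul_le_of_le_one_right (hw i) (hμ_sum i)
      _ = 1 := hw_sum
  · calc ∏ i, μ i j ^ θ i = (∏ i, μ i j ^ (θ i / ∑ i, θ i)) ^ ∑ i, θ i := by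
          rw [← Real.finsetProd_rpow _ _ fun i _ => Real.rpow_nonneg (hμ i j) _]
          simp only [← Real.rpow_mul (hμ _ j), div_mul_cancel₀ _ hpos.ne']
      _ ≤ (∑ i, (θ i / ∑ i, θ i) * μ i j) ^ ∑ i, θ i := by
          refine Real.rpow_le_rpow
            (Finset.prod_nonneg fun i _ => Real.rpow_nonneg (hμ i j) _) ?_ hpos.le
          exact Real.geom_mean_le_arith_mean_weighted _ _ _ (fun i _ => hw i) hw_sum
            fun i _ => hμ i j

variable {𝕜 : Type*} [RCLike 𝕜] {F : Type*} [NormedAddCommGroup F] [NormedSpace 𝕜 F]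

lemma norm_map_ofReal_smul {ι : Type*} [Fintype ι] {E : ι → Type*} [∀ i, NormedAddCommGroup (E i)]
    [∀ i, NormedSpace 𝕜 (E i)] (A : ContinuousMultilinearMap 𝕜 E F) {c : ι → ℝ} (hc : 0 ≤ c)
    (x : ∀ i, E i) : ‖A fun i => (c i : 𝕜) • x i‖ = (∏ i, c i) * ‖A x‖ := by
  rw [A.map_smul_univ, norm_smul, norm_prod]
  simp only [RCLike.norm_ofReal, abs_of_nonneg (hc _)]

lemma norm_map_norm_rpow_smul_rpow {ι : Type*} [Fintype ι] {E : ι → Type*}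
    [∀ i, NormedAddCommGroup (E i)] [∀ i, NormedSpace 𝕜 (E i)]
    (A : ContinuousMultilinearMap 𝕜 E F) {p q : ℝ} (hp : 0 < p) (hq : 0 < q) {δ : ι → ℝ}
    (hδ : ∑ i, δ i = p⁻¹ - q⁻¹) (x : ∀ i, E i) :
    ‖A fun i => (((‖A x‖ ^ q) ^ δ i : ℝ) : 𝕜) • x i‖ ^ p = ‖A x‖ ^ q := by
  rw [norm_map_ofReal_smul A (fun i => Real.rpow_nonneg (by positivity) _)]
  obtain h0 | hpos := (norm_nonneg (A x)).eq_or_lt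
  · simp [← h0, hp.ne', hq.ne']
  calc ((∏ i, (‖A x‖ ^ q) ^ δ i) * ‖A x‖) ^ p = (‖A x‖ ^ (q * (p⁻¹ - q⁻¹)) * ‖A x‖) ^ p := by
        rw [← Real.rpow_sum_of_pos (by positivity), hδ, ← Real.rpow_mul hpos.le]
    _ = ‖A x‖ ^ ((q * (p⁻¹ - q⁻¹) + 1) * p) := by
        rw [← Real.rpow_add_one hpos.ne', ← Real.rpow_mul hpos.le]
    _ = ‖A x‖ ^ q := by
        congr 1
        field_simp
        ring

variable {n : ℕ} {E : Fin n → Type*} [∀ i, NormedAddCommGroup (E i)] [∀ i, NormedSpace 𝕜 (E i)]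
  {A : ContinuousMultilinearMap 𝕜 E F} {r s : Fin n → ℝ≥0∞}

lemma IsAbsSummingE.inclusion {p q : ℝ} (hp : 0 < p) (hq : 0 < q) (hr : ∀ i, r i ≠ 0)
    (hrs : ∀ i, r i ≤ s i) (hpq : ∑ i, ((r i)⁻¹.toReal - (s i)⁻¹.toReal) = p⁻¹ - q⁻¹)
    (hA : IsAbsSummingE (ENNReal.ofReal p) r A) : IsAbsSummingE (ENNReal.ofReal q) s A := by
  -- The hypothesis is tested on multiples `z` of `x` with `‖A z‖ ^ p = ‖A x‖ ^ q`.
  obtain ⟨C, hC, hA⟩ := hA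
  refine ⟨C, hC, fun m x => ?_⟩
  have hW : 0 ≤ ∏ i, weakNormE 𝕜 (s i) (x i) :=
    Finset.prod_nonneg fun i _ => weakNormE_nonneg _ _
  let a (j : Fin m) : ℝ := ‖A fun i => x i j‖ ^ q
  have ha : 0 ≤ a := fun j => by positivity
  have hlp_q : lpNormE (ENNReal.ofReal q) (fun j => A fun i => x i j) = (∑ j, a j) ^ q⁻¹ := by
    rw [lpNormE, if_neg ENNReal.ofReal_ne_top, ENNReal.toReal_ofReal hq.le, one_div]
  rw [hlp_q]
  obtain h0 | hpos := (Finset.sum_nonneg fun j _ => ha j : 0 ≤ ∑ j, a j).eq_or_lt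
  · rw [← h0, Real.zero_rpow (inv_ne_zero hq.ne')]
    positivity
  let z (i : Fin n) (j : Fin m) : E i := ((a j ^ ((r i)⁻¹.toReal - (s i)⁻¹.toReal) : ℝ) : 𝕜) • x i j
  have hlp_p : lpNormE (ENNReal.ofReal p) (fun j => A fun i => z i j) = (∑ j, a j) ^ p⁻¹ := by
    rw [lpNormE, if_neg ENNReal.ofReal_ne_top, ENNReal.toReal_ofReal hp.le, one_div]
    simp only [z, a, norm_map_norm_rpow_smul_rpow A hp hq hpq fun i => x i _]
  have hz : ∏ i, weakNormE 𝕜 (r i) (z i) ≤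
      (∑ j, a j) ^ (p⁻¹ - q⁻¹) * ∏ i, weakNormE 𝕜 (s i) (x i) := by
    rw [← hpq, Real.rpow_sum_of_pos hpos, ← Finset.prod_mul_distrib]
    exact Finset.prod_le_prod (fun i _ => weakNormE_nonneg _ _) fun i _ =>
      weakNormE_rpow_smul_le (hr i) (hrs i) ha (x i)
  refine le_of_mul_le_mul_left ?_ (Real.rpow_pos_of_pos hpos (p⁻¹ - q⁻¹))
  calc (∑ j, a j) ^ (p⁻¹ - q⁻¹) * (∑ j, a j) ^ q⁻¹
      = lpNormE (ENNReal.ofReal p) (fun j => A fun i => z i j) := by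
        rw [hlp_p, ← Real.rpow_add hpos, sub_add_cancel]
    _ ≤ C * ∏ i, weakNormE 𝕜 (r i) (z i) := hA m z
    _ ≤ C * ((∑ j, a j) ^ (p⁻¹ - q⁻¹) * ∏ i, weakNormE 𝕜 (s i) (x i)) := by gcongr
    _ = _ := mul_left_comm _ _ _

lemma IsAbsSummingE.of_weakFactorization {p q : ℝ≥0∞} (hp : p ≠ 0) (hpq : p ≤ q) {θ : Fin n → ℝ}
    (hθ : 0 ≤ θ) (hθ_sum : ∑ i, θ i = p⁻¹.toReal - q⁻¹.toReal)
    (hE : ∀ i, WeakFactorization 𝕜 (E i) (θ i) (r i) (s i)) (hA : IsAbsSummingE q s A) :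
    IsAbsSummingE p r A := by
  obtain ⟨C, hC, hA⟩ := hA
  choose K hK hE using hE
  refine ⟨C * ∏ i, K i, mul_pos hC (Finset.prod_pos fun i _ => hK i), fun m x => ?_⟩
  choose μ y hμ hμ_sum hxy hy using fun i => hE i m (x i)
  obtain ⟨ν, hν, hν_sum, hν_prod⟩ := exists_weight_prod_rpow_le hθ hμ hμ_sum
  rw [hθ_sum] at hν_prod
  have hθ_nonneg : 0 ≤ p⁻¹.toReal - q⁻¹.toReal := hθ_sum ▸ Finset.sum_nonneg fun i _ => hθ i
  have hν_sum_nonneg : 0 ≤ ∑ j, ν j := Finset.sum_nonneg fun j _ => hν j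
  have hAx (j : Fin m) : ‖A fun i => x i j‖ ≤
      ‖((ν j ^ (p⁻¹.toReal - q⁻¹.toReal) : ℝ) : 𝕜) • A fun i => y i j‖ := by
    simp only [hxy]
    rw [norm_map_ofReal_smul A fun i => Real.rpow_nonneg (hμ i j) _, norm_smul,
      RCLike.norm_ofReal]
    gcongr
    exact (hν_prod j).trans (le_abs_self _)
  calc lpNormE p (fun j => A fun i => x i j)
      ≤ lpNormE p (fun j => ((ν j ^ (p⁻¹.toReal - q⁻¹.toReal) : ℝ) : 𝕜) • A fun i => y i j) :=
        lpNormE_mono p hAx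
    _ ≤ (∑ j, ν j) ^ (p⁻¹.toReal - q⁻¹.toReal) * lpNormE q (fun j => A fun i => y i j) :=
        lpNormE_rpow_smul_le hp hpq hν _
    _ ≤ lpNormE q (fun j => A fun i => y i j) :=
        mul_le_of_le_one_left (lpNormE_nonneg q _)
          (Real.rpow_le_one hν_sum_nonneg hν_sum hθ_nonneg)
    _ ≤ C * ∏ i, weakNormE 𝕜 (s i) (y i) := hA m y
    _ ≤ C * ∏ i, K i * weakNormE 𝕜 (r i) (x i) := by
        gcongr with i
        · exact fun i _ => weakNormE_nonneg _ _
        · exact hy i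
    _ = _ := by rw [Finset.prod_mul_distrib, mul_assoc]

end AbsSumming

theorem cotype2_exponent_shift_general {𝕜 : Type*} [RCLike 𝕜] {n : ℕ} (s : Finset (Fin n))
    (E : Fin n → Type*) [∀ i, NormedAddCommGroup (E i)] [∀ i, NormedSpace 𝕜 (E i)]
    (hcot : ∀ i ∈ s, HasCotype2 (E i))
    (F : Type*) [NormedAddCommGroup F] [NormedSpace 𝕜 F]
    (p q : ℝ) (hp : 0 < p) (hq : 0 < q)
    (qs : Fin n → ℝ) (hqs : ∀ i ∈ s, 1 ≤ qs i ∧ qs i ≤ 2)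
    (ps : Fin n → ℝ≥0∞) (hps : ∀ i ∉ s, ps i ≠ 0)
    (heq : ∑ i ∈ s, 1 / qs i - 1 / q = (s.card : ℝ) - 1 / p)
    (A : ContinuousMultilinearMap 𝕜 E F) :
    IsAbsSummingE (ENNReal.ofReal p) (fun i => if i ∈ s then 1 else ps i) A ↔
      IsAbsSummingE (ENNReal.ofReal q)
        (fun i => if i ∈ s then ENNReal.ofReal (qs i) else ps i) A := by
  let θ (i : Fin n) : ℝ := if i ∈ s then 1 - 1 / qs i else 0
  have hqs_pos (i) (hi : i ∈ s) : 0 < qs i := one_pos.trans_le (hqs i hi).1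
  have hθ : 0 ≤ θ := fun i => by
    by_cases hi : i ∈ s
    · simpa [θ, hi] using inv_le_one_of_one_le₀ (hqs i hi).1
    · simp [θ, hi]
  have hθ_sum : ∑ i, θ i = p⁻¹ - q⁻¹ := by
    simp only [θ, Finset.sum_ite_mem, Finset.univ_inter, Finset.sum_sub_distrib, Finset.sum_const,
      nsmul_eq_mul, mul_one, ← one_div]
    linarith
  have hpq : p ≤ q := by
    rw [← inv_le_inv₀ hq hp]
    linarith [Finset.sum_nonneg fun i (_ : i ∈ Finset.univ) => hθ i]
  constructor
  · refine .inclusion hp hq (fun i => ?_) (fun i => ?_) ?_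
    · by_cases hi : i ∈ s <;> simp [hi, hps]
    · by_cases hi : i ∈ s <;> simp [hi, (hqs i _).1]
    · rw [← hθ_sum]
      refine Finset.sum_congr rfl fun i _ => ?_
      by_cases hi : i ∈ s <;> simp [θ, hi, ENNReal.toReal_inv, (hqs_pos i _).le]
  · refine .of_weakFactorization (by simpa) (ENNReal.ofReal_le_ofReal hpq) hθ ?_ fun i => ?_
    · simpa [ENNReal.toReal_inv, hp.le, hq.le]
    · by_cases hi : i ∈ s
      · simpa only [θ, hi, if_true] using (hcot i hi).weakFactorization (hqs i hi).1 (hqs i hi).2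
      · simpa only [θ, hi, if_false] using .refl _

/-- If `E₁, …, E_k` have cotype 2, `p ≤ q`, `1 ≤ q_i ≤ 2` for `i ≤ k`, and
`∑_{i≤k} 1/q_i − 1/q = k − 1/p`, then for arbitrary exponents `p_{k+1}, …, p_n ∈ [1,∞]`, a
continuous `n`-linear map is absolutely `(p; 1, …, 1, p_{k+1}, …, p_n)`-summing iff it is
absolutely `(q; q₁, …, q_k, p_{k+1}, …, p_n)`-summing. -/
theorem cotype2_exponent_shift {𝕜 : Type*} [RCLike 𝕜] {n k : ℕ} (hk : 1 ≤ k) (hkn : k ≤ n)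
    (E : Fin n → Type*) [∀ i, NormedAddCommGroup (E i)] [∀ i, NormedSpace 𝕜 (E i)]
    [∀ i, CompleteSpace (E i)]
    (hcot : ∀ i : Fin n, i.val < k → HasCotype2 (E i))
    (F : Type*) [NormedAddCommGroup F] [NormedSpace 𝕜 F] [CompleteSpace F]
    (p q : ℝ) (hp : 0 < p) (hpq : p ≤ q)
    (qs : Fin n → ℝ) (hqs : ∀ i : Fin n, i.val < k → 1 ≤ qs i ∧ qs i ≤ 2)
    (ps : Fin n → ℝ≥0∞) (hps : ∀ i : Fin n, k ≤ i.val → 1 ≤ ps i)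
    (heq : (∑ i ∈ Finset.univ.filter (fun i : Fin n => i.val < k), 1 / qs i) - 1 / q
      = (k : ℝ) - 1 / p)
    (A : ContinuousMultilinearMap 𝕜 E F) :
    IsAbsSummingE (ENNReal.ofReal p) (fun i => if i.val < k then 1 else ps i) A ↔
      IsAbsSummingE (ENNReal.ofReal q)
        (fun i => if i.val < k then ENNReal.ofReal (qs i) else ps i) A := by
  have hcard : (Finset.univ.filter fun i : Fin n => i.val < k).card = k := by
    simp [Fin.card_filter_val_lt, hkn]
  simpa using cotype2_exponent_shift_general (Finset.univ.filter fun i : Fin n => i.val < k)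
    E (by simpa) F p q hp (hp.trans_le hpq) qs (by simpa) ps
    (fun i hi => (one_pos.trans_le (hps i (by simpa using hi))).ne') (by rwa [hcard]) A
end

section
/- Let 1 ≤ k < n, let F be a Banach space, and assume that every continuous k-linear map from E_1 × ⋯ × E_k to F is absolutely (p;q_1,…,q_k)-summing, and that E_{k+1}, …, E_n have cotype 2. If p ≤ q and 1 ≤ q_i ≤ 2 for i = k+1,…,n satisfy Σ_{i=k+1}^n 1/q_i − 1/q = (n−k) − 1/p, then every continuous n-linear map from E_1 × ⋯ × E_n to F is absolutely (q;q_1,…,q_n)-summing. -/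
open scoped BigOperators NNReal ENNReal

/-- The weak `ℓ_r` norm of a finite family `(x_j)` in a normed space:
`sup_{‖φ‖ ≤ 1} (∑_j ‖φ(x_j)‖^r)^(1/r)`. -/
noncomputable def weakNorm (𝕜 : Type*) [RCLike 𝕜] {E : Type*} [NormedAddCommGroup E]
    [NormedSpace 𝕜 E] (r : ℝ) {m : ℕ} (x : Fin m → E) : ℝ :=
  ⨆ φ : {φ : E →L[𝕜] 𝕜 // ‖φ‖ ≤ 1}, (∑ j, ‖φ.1 (x j)‖ ^ r) ^ (1 / r)

/-- A continuous multilinear map is absolutely `(p; p₁, …, pₙ)`-summing. -/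
def IsAbsSumming {𝕜 : Type*} [RCLike 𝕜] {n : ℕ} {E : Fin n → Type*}
    [∀ i, NormedAddCommGroup (E i)] [∀ i, NormedSpace 𝕜 (E i)]
    {F : Type*} [NormedAddCommGroup F] [NormedSpace 𝕜 F]
    (p : ℝ) (ps : Fin n → ℝ) (A : ContinuousMultilinearMap 𝕜 E F) : Prop :=
  ∃ C > 0, ∀ (m : ℕ) (x : ∀ i, Fin m → E i),
    (∑ j, ‖A (fun i => x i j)‖ ^ p) ^ (1 / p) ≤ C * ∏ i, weakNorm 𝕜 (ps i) (x i)

/-!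
If all `k`-linear maps into `F` are summing, Baire's theorem bounds their summing constants by a
multiple of their norms. Freeze the remaining arguments of an `n`-linear map at random sums
`∑_j ε_j x_j`, whose norms are at most the weak `ℓ_1` norms of the families: averaging the
estimates for the resulting `k`-linear maps over the signs shows that the `n`-linear map is
`(p; q_1, …, q_k, 1, …, 1)`-summing. Hölder's inequality with the weights `‖A(x_j)‖ ^ q` then
trades the exponents `1` for the `q_i` at the price of replacing `p` by `q`.
-/

lemma half_add_rpow_le {a b p : ℝ} (ha : 0 ≤ a) (hb : 0 ≤ b) (hp : 0 ≤ p) :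
    ((a + b) / 2) ^ p ≤ a ^ p + b ^ p := by
  wlog hab : a ≤ b generalizing a b
  · simpa only [add_comm] using this hb ha (le_of_not_ge hab)
  calc ((a + b) / 2) ^ p ≤ b ^ p := by gcongr; linarith
    _ ≤ a ^ p + b ^ p := le_add_of_nonneg_left (by positivity)

lemma add_rpow_le_two_rpow_mul {a b p : ℝ} (ha : 0 ≤ a) (hb : 0 ≤ b) (hp : 0 ≤ p) :
    (a + b) ^ p ≤ 2 ^ p * (a ^ p + b ^ p) := by
  rw [← div_le_iff₀' (by positivity), ← Real.div_rpow (by positivity) (by positivity)]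
  exact half_add_rpow_le ha hb hp

lemma sum_rpow_le_rpow_sum {ι : Type*} (s : Finset ι) {a : ι → ℝ} (ha : ∀ j, 0 ≤ a j) {r : ℝ}
    (hr : 1 ≤ r) : ∑ j ∈ s, a j ^ r ≤ (∑ j ∈ s, a j) ^ r := by
  classical
  induction s using Finset.induction_on with
  | empty => simp [Real.zero_rpow (by linarith : r ≠ 0)]
  | insert j s hj ih =>
    rw [Finset.sum_insert hj, Finset.sum_insert hj]
    exact (by gcongr : _ ≤ a j ^ r + (∑ j ∈ s, a j) ^ r).trans
      (Real.add_rpow_le_rpow_add (ha j) (Finset.sum_nonneg fun j _ => ha j) hr)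

section StrongNorm

variable {ι : Type*} [Fintype ι] {E : Type*} [NormedAddCommGroup E]

/-- The strong `ℓ_r` norm `(∑_j ‖x_j‖^r)^(1/r)` of a finite family, the left-hand side of the
inequality defining summing maps. It is used for `0 < r`, and is only a quasi-norm for `r < 1`. -/
noncomputable def strongNorm (r : ℝ) (x : ι → E) : ℝ :=
  (∑ j, ‖x j‖ ^ r) ^ (1 / r)

lemma strongNorm_nonneg (r : ℝ) (x : ι → E) : 0 ≤ strongNorm r x := by
  unfold strongNorm; positivity

lemma strongNorm_rpow {r : ℝ} (hr : 0 < r) (x : ι → E) : strongNorm r x ^ r = ∑ j, ‖x j‖ ^ r := by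
  rw [strongNorm, ← Real.rpow_mul (by positivity), one_div_mul_cancel hr.ne', Real.rpow_one]

lemma strongNorm_le_iff {r M : ℝ} (hr : 0 < r) (hM : 0 ≤ M) (x : ι → E) :
    strongNorm r x ≤ M ↔ ∑ j, ‖x j‖ ^ r ≤ M ^ r := by
  rw [← strongNorm_rpow hr, Real.rpow_le_rpow_iff (strongNorm_nonneg r x) hM hr]

lemma strongNorm_mono {F : Type*} [NormedAddCommGroup F] {r : ℝ} (hr : 0 ≤ r) {x : ι → E}
    {y : ι → F} (h : ∀ j, ‖x j‖ ≤ ‖y j‖) : strongNorm r x ≤ strongNorm r y := by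
  unfold strongNorm
  gcongr with j
  exact h j

lemma strongNorm_smul {𝕜 : Type*} [NormedField 𝕜] [NormedSpace 𝕜 E] {r : ℝ} (hr : 0 < r) (c : 𝕜)
    (x : ι → E) : strongNorm r (c • x) = ‖c‖ * strongNorm r x := by
  simp only [strongNorm, Pi.smul_apply, norm_smul, Real.mul_rpow, norm_nonneg, ← Finset.mul_sum]
  rw [Real.mul_rpow (by positivity) (by positivity), ← Real.rpow_mul (norm_nonneg c),
    mul_one_div_cancel hr.ne', Real.rpow_one]

lemma strongNorm_sub_le {r : ℝ} (hr : 0 < r) (x y : ι → E) :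
    strongNorm r (x - y) ≤ 2 * 2 ^ (1 / r) * (strongNorm r x + strongNorm r y) := by
  have hsum : ∑ j, ‖(x - y) j‖ ^ r ≤ 2 ^ r * (∑ j, ‖x j‖ ^ r + ∑ j, ‖y j‖ ^ r) := by
    rw [← Finset.sum_add_distrib, Finset.mul_sum]
    gcongr with j
    exact (Real.rpow_le_rpow (norm_nonneg _) (norm_sub_le _ _) hr.le).trans
      (add_rpow_le_two_rpow_mul (norm_nonneg _) (norm_nonneg _) hr.le)
  calc strongNorm r (x - y)
      ≤ (2 ^ r * (∑ j, ‖x j‖ ^ r + ∑ j, ‖y j‖ ^ r)) ^ (1 / r) := by unfold strongNorm; gcongr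
    _ = 2 * (∑ j, ‖x j‖ ^ r + ∑ j, ‖y j‖ ^ r) ^ (1 / r) := by
      rw [Real.mul_rpow (by positivity) (by positivity), ← Real.rpow_mul zero_le_two,
        mul_one_div_cancel hr.ne', Real.rpow_one]
    _ ≤ 2 * (2 ^ (1 / r) * (strongNorm r x + strongNorm r y)) := by
      gcongr
      exact add_rpow_le_two_rpow_mul (by positivity) (by positivity) (by positivity)
    _ = 2 * 2 ^ (1 / r) * (strongNorm r x + strongNorm r y) := by ring

lemma strongNorm_anti {p q : ℝ} (hp : 0 < p) (hpq : p ≤ q) (x : ι → E) :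
    strongNorm q x ≤ strongNorm p x := by
  have hq : 0 < q := hp.trans_le hpq
  rw [strongNorm_le_iff hq (strongNorm_nonneg p x)]
  calc ∑ j, ‖x j‖ ^ q = ∑ j, (‖x j‖ ^ p) ^ (q / p) := by
        simp only [← Real.rpow_mul (norm_nonneg _), mul_div_cancel₀ q hp.ne']
    _ ≤ (∑ j, ‖x j‖ ^ p) ^ (q / p) :=
        sum_rpow_le_rpow_sum _ (fun j => by positivity) ((one_le_div hp).2 hpq)
    _ = strongNorm p x ^ q := by
        rw [← strongNorm_rpow hp, ← Real.rpow_mul (strongNorm_nonneg p x), mul_div_cancel₀ q hp.ne']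

/- Hölder's inequality for the exponents `1 / p = (1 / p - 1 / q) + 1 / q`, stated so that the
endpoint `p = q` is included. -/
lemma strongNorm_rpow_smul_le {𝕜 : Type*} [RCLike 𝕜] [NormedSpace 𝕜 E] {p q : ℝ} (hp : 0 < p)
    (hpq : p ≤ q) {a : ι → ℝ} (ha : ∀ j, 0 ≤ a j) (x : ι → E) :
    strongNorm p (fun j => ((a j ^ (1 / p - 1 / q) : ℝ) : 𝕜) • x j) ≤
      (∑ j, a j) ^ (1 / p - 1 / q) * strongNorm q x := by
  obtain rfl | hlt := hpq.eq_or_lt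
  · simp
  have hβ : 0 < 1 / p - 1 / q := sub_pos.2 (one_div_lt_one_div_of_lt hp hlt)
  have hq : 0 < q := hp.trans hlt
  have hA : 0 ≤ ∑ j, a j := Finset.sum_nonneg fun j _ => ha j
  have htriple : (1 / p - 1 / q)⁻¹.HolderTriple q p := ⟨by simp, inv_pos.2 hβ, hq⟩
  have hholder := Real.Lr_rpow_le_Lp_mul_Lq_of_nonneg Finset.univ htriple
    (f := fun j => a j ^ (1 / p - 1 / q)) (g := fun j => ‖x j‖)
    (fun j _ => Real.rpow_nonneg (ha j) _) (fun j _ => norm_nonneg _)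
  simp only [← Real.rpow_mul (ha _), mul_inv_cancel₀ hβ.ne', Real.rpow_one, div_inv_eq_mul]
    at hholder
  rw [strongNorm_le_iff hp (mul_nonneg (by positivity) (strongNorm_nonneg q x)),
    Real.mul_rpow (by positivity) (strongNorm_nonneg q x), ← Real.rpow_mul hA, strongNorm,
    ← Real.rpow_mul (by positivity), one_div_mul_eq_div, mul_comm _ p]
  simpa only [norm_smul, RCLike.norm_ofReal, abs_of_nonneg (Real.rpow_nonneg (ha _) _)]
    using hholder

end StrongNorm

section WeakNorm

variable {𝕜 : Type*} [RCLike 𝕜] {E : Type*} [NormedAddCommGroup E] [NormedSpace 𝕜 E] {m : ℕ}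

lemma strongNorm_le_weakNorm {r : ℝ} (hr : 0 ≤ r) (x : Fin m → E) {φ : E →L[𝕜] 𝕜}
    (hφ : ‖φ‖ ≤ 1) : strongNorm r (fun j => φ (x j)) ≤ weakNorm 𝕜 r x := by
  have hbdd : BddAbove (Set.range fun ψ : {ψ : E →L[𝕜] 𝕜 // ‖ψ‖ ≤ 1} =>
      strongNorm r fun j => ψ.1 (x j)) := by
    refine ⟨strongNorm r x, ?_⟩
    rintro _ ⟨ψ, rfl⟩
    exact strongNorm_mono hr fun j => ψ.1.le_of_opNorm_le_of_le ψ.2 le_rfl |>.trans_eq (one_mul _)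
  exact le_ciSup hbdd ⟨φ, hφ⟩

lemma weakNorm_le {r M : ℝ} {x : Fin m → E}
    (h : ∀ φ : E →L[𝕜] 𝕜, ‖φ‖ ≤ 1 → strongNorm r (fun j => φ (x j)) ≤ M) :
    weakNorm 𝕜 r x ≤ M :=
  have : Nonempty {φ : E →L[𝕜] 𝕜 // ‖φ‖ ≤ 1} := ⟨⟨0, by simp⟩⟩
  ciSup_le fun φ => h φ.1 φ.2

lemma weakNorm_nonneg (r : ℝ) (x : Fin m → E) : 0 ≤ weakNorm 𝕜 r x :=
  Real.iSup_nonneg fun _ => strongNorm_nonneg r _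

lemma weakNorm_rpow_smul_le {p q : ℝ} (hp : 0 < p) (hpq : p ≤ q) {a : Fin m → ℝ}
    (ha : ∀ j, 0 ≤ a j) (x : Fin m → E) :
    weakNorm 𝕜 p (fun j => ((a j ^ (1 / p - 1 / q) : ℝ) : 𝕜) • x j) ≤
      (∑ j, a j) ^ (1 / p - 1 / q) * weakNorm 𝕜 q x := by
  have hA : 0 ≤ ∑ j, a j := Finset.sum_nonneg fun j _ => ha j
  refine weakNorm_le fun φ hφ => ?_
  simp only [map_smul]
  exact (strongNorm_rpow_smul_le hp hpq ha _).trans <| by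
    gcongr
    exact strongNorm_le_weakNorm (hp.trans_le hpq).le x hφ

end WeakNorm

section Signs

variable (𝕜 : Type*) [RCLike 𝕜] {E : Type*} [NormedAddCommGroup E] [NormedSpace 𝕜 E]

lemma norm_sum_signs_smul_le_weakNorm_one {m : ℕ} (ε : Fin m → ℤˣ) (x : Fin m → E) :
    ‖∑ j, ε j • x j‖ ≤ weakNorm 𝕜 1 x := by
  obtain ⟨φ, hφ, hφx⟩ := exists_dual_vector'' 𝕜 (∑ j, ε j • x j)
  have hsign (j) : ‖φ (ε j • x j)‖ = ‖φ (x j)‖ := by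
    obtain h | h := Int.units_eq_one_or (ε j) <;> simp [h]
  calc ‖∑ j, ε j • x j‖ = ‖∑ j, φ (ε j • x j)‖ := by rw [← map_sum, hφx]; simp
    _ ≤ ∑ j, ‖φ (x j)‖ := (norm_sum_le _ _).trans_eq (by simp only [hsign])
    _ = strongNorm 1 fun j => φ (x j) := by simp [strongNorm]
    _ ≤ weakNorm 𝕜 1 x := strongNorm_le_weakNorm zero_le_one x hφ

/- Flipping the sign `ε j` permutes the sign vectors and changes `∑ i, ε i • z i` by `±2 z j`. -/
include 𝕜 in
lemma norm_rpow_le_two_mul_expect_signs {ι : Type*} [Fintype ι] [DecidableEq ι] {p : ℝ} (hp : 0 ≤ p)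
    (z : ι → E) (j : ι) : ‖z j‖ ^ p ≤ 2 * 𝔼 ε : ι → ℤˣ, ‖∑ i, ε i • z i‖ ^ p := by
  let flip : (ι → ℤˣ) ≃ (ι → ℤˣ) := Equiv.mulRight (Pi.mulSingle j (-1))
  have hdiff (ε : ι → ℤˣ) : ∑ i, ε i • z i - ∑ i, flip ε i • z i = 2 • ε j • z j := by
    rw [← Finset.sum_sub_distrib, Finset.sum_eq_single j]
    · simp [flip, two_smul]
    · intro i _ hij
      simp [flip, Pi.mulSingle_eq_of_ne hij]
    · simp
  have hnorm (ε : ι → ℤˣ) :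
      ‖z j‖ ≤ (‖∑ i, ε i • z i‖ + ‖∑ i, flip ε i • z i‖) / 2 := by
    have hsign : ‖ε j • z j‖ = ‖z j‖ := by
      obtain h | h := Int.units_eq_one_or (ε j) <;> simp [h]
    have htri := norm_sub_le (∑ i, ε i • z i) (∑ i, flip ε i • z i)
    rw [hdiff, RCLike.norm_nsmul 𝕜, hsign, nsmul_eq_mul] at htri
    push_cast at htri
    linarith
  calc ‖z j‖ ^ p = 𝔼 _ε : ι → ℤˣ, ‖z j‖ ^ p := (Fintype.expect_const _).symm
    _ ≤ 𝔼 ε : ι → ℤˣ, (‖∑ i, ε i • z i‖ ^ p + ‖∑ i, flip ε i • z i‖ ^ p) :=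
      Finset.expect_le_expect fun ε _ =>
        (Real.rpow_le_rpow (norm_nonneg _) (hnorm ε) hp).trans
          (half_add_rpow_le (norm_nonneg _) (norm_nonneg _) hp)
    _ = 2 * 𝔼 ε : ι → ℤˣ, ‖∑ i, ε i • z i‖ ^ p := by
      rw [Finset.expect_add_distrib, two_mul,
        Fintype.expect_equiv flip _ (fun ε => ‖∑ i, ε i • z i‖ ^ p) fun _ => rfl]

include 𝕜 in
lemma strongNorm_diag_le_of_forall_signs {ι : Type*} [Fintype ι] {p M : ℝ} (hp : 0 < p)
    {z : ι → ι → E} (h : ∀ ε : ι → ℤˣ, strongNorm p (fun j => ∑ i, ε i • z i j) ≤ M) :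
    strongNorm p (fun j => z j j) ≤ 2 ^ (1 / p) * M := by
  classical
  have hM : 0 ≤ M := (strongNorm_nonneg p _).trans (h 1)
  rw [strongNorm_le_iff hp (by positivity), Real.mul_rpow (by positivity) hM,
    ← Real.rpow_mul zero_le_two, one_div_mul_cancel hp.ne', Real.rpow_one]
  calc ∑ j, ‖z j j‖ ^ p ≤ ∑ j, 2 * 𝔼 ε : ι → ℤˣ, ‖∑ i, ε i • z i j‖ ^ p := by
        gcongr with j
        exact norm_rpow_le_two_mul_expect_signs 𝕜 hp.le (fun i => z i j) j
    _ = 2 * 𝔼 ε : ι → ℤˣ, ∑ j, ‖∑ i, ε i • z i j‖ ^ p := by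
        rw [← Finset.mul_sum, Finset.expect_sum_comm]
    _ ≤ 2 * M ^ p := by
        gcongr
        exact Finset.expect_le Finset.univ_nonempty fun ε _ => (strongNorm_le_iff hp hM _).1 (h ε)

end Signs

/- The Banach-Steinhaus theorem for quasi-seminorms: Baire's theorem gives a ball on which the
weighted `Φ a` are uniformly bounded, and the quasi-triangle inequality centres it at `0`. -/
lemma exists_uniform_bound_of_quasiSeminorm {𝕜 V α : Type*} [NontriviallyNormedField 𝕜]
    [NormedAddCommGroup V] [NormedSpace 𝕜 V] [CompleteSpace V] {Φ : α → V → ℝ} {w : α → ℝ}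
    {K : ℝ} (hw : ∀ a, 0 ≤ w a) (hK : 0 ≤ K) (hΦ : ∀ a, LowerSemicontinuous (Φ a))
    (hsub : ∀ a u v, Φ a (u - v) ≤ K * (Φ a u + Φ a v))
    (hsmul : ∀ a (c : 𝕜) v, Φ a (c • v) = ‖c‖ * Φ a v)
    (hbdd : ∀ v, ∃ C, ∀ a, Φ a v ≤ C * w a) :
    ∃ C, 0 ≤ C ∧ ∀ a v, Φ a v ≤ C * ‖v‖ * w a := by
  let S (N : ℕ) : Set V := {v | ∀ a, Φ a v ≤ N * w a}
  have hclosed (N) : IsClosed (S N) := by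
    have hS : S N = ⋂ a, Φ a ⁻¹' Set.Iic (N * w a) := by ext; simp [S]
    rw [hS]
    exact isClosed_iInter fun a => (hΦ a).isClosed_preimage _
  have hcover : ⋃ N, S N = Set.univ := by
    refine Set.eq_univ_of_forall fun v => ?_
    obtain ⟨C, hC⟩ := hbdd v
    obtain ⟨N, hN⟩ := exists_nat_ge C
    exact Set.mem_iUnion.2 ⟨N, fun a => (hC a).trans (by gcongr; exact hw a)⟩
  obtain ⟨N, u, hu⟩ := nonempty_interior_of_iUnion_of_closed hclosed hcover
  obtain ⟨ρ, hρ, hball⟩ := Metric.isOpen_iff.1 isOpen_interior u hu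
  have hsmall (a : α) (v : V) (hv : ‖v‖ < ρ) : Φ a v ≤ 2 * K * N * w a := by
    have huv : u + v ∈ S N := interior_subset (hball (by simpa using hv))
    calc Φ a v = Φ a (u + v - u) := by rw [add_sub_cancel_left]
      _ ≤ K * (Φ a (u + v) + Φ a u) := hsub a _ _
      _ ≤ K * (N * w a + N * w a) := by gcongr; exacts [huv a, interior_subset hu a]
      _ = 2 * K * N * w a := by ring
  obtain ⟨c, hc⟩ := NormedField.exists_one_lt_norm 𝕜
  refine ⟨ρ⁻¹ * ‖c‖ * (2 * K * N), by positivity, fun a v => ?_⟩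
  obtain rfl | hv := eq_or_ne v 0
  · have hzero : Φ a 0 = 0 := by simpa using hsmul a 0 0
    simp [hzero]
  obtain ⟨d, hd, hdv, -, hdinv⟩ := rescale_to_shell hc hρ hv
  have hwa := hw a
  calc Φ a v = ‖d‖⁻¹ * Φ a (d • v) := by rw [hsmul, inv_mul_cancel_left₀ (norm_ne_zero_iff.2 hd)]
    _ ≤ ‖d‖⁻¹ * (2 * K * N * w a) := by gcongr; exact hsmall a _ hdv
    _ ≤ ρ⁻¹ * ‖c‖ * ‖v‖ * (2 * K * N * w a) := by gcongr
    _ = ρ⁻¹ * ‖c‖ * (2 * K * N) * ‖v‖ * w a := by ring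

section Summing

variable {𝕜 : Type*} [RCLike 𝕜] {n : ℕ} {F : Type*} [NormedAddCommGroup F] [NormedSpace 𝕜 F]

lemma prod_weakNorm_nonneg {ι : Type*} [Fintype ι] {E : ι → Type*} [∀ i, NormedAddCommGroup (E i)]
    [∀ i, NormedSpace 𝕜 (E i)] (ps : ι → ℝ) {m : ℕ} (x : ∀ i, Fin m → E i) :
    0 ≤ ∏ i, weakNorm 𝕜 (ps i) (x i) :=
  Finset.prod_nonneg fun i _ => weakNorm_nonneg (ps i) (x i)

lemma prod_weakNorm_rpow_smul_le {ι : Type*} [Fintype ι] {E : ι → Type*}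
    [∀ i, NormedAddCommGroup (E i)] [∀ i, NormedSpace 𝕜 (E i)] {ps qs : ι → ℝ}
    (hps : ∀ i, 0 < ps i) (hpqs : ∀ i, ps i ≤ qs i) {m : ℕ} {a : Fin m → ℝ} (ha : ∀ j, 0 ≤ a j)
    (x : ∀ i, Fin m → E i) :
    ∏ i, weakNorm 𝕜 (ps i) (fun j => ((a j ^ (1 / ps i - 1 / qs i) : ℝ) : 𝕜) • x i j) ≤
      (∑ j, a j) ^ (∑ i, (1 / ps i - 1 / qs i)) * ∏ i, weakNorm 𝕜 (qs i) (x i) := by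
  have hA : 0 ≤ ∑ j, a j := Finset.sum_nonneg fun j _ => ha j
  rw [Real.rpow_sum_of_nonneg hA fun i _ =>
    sub_nonneg.2 (one_div_le_one_div_of_le (hps i) (hpqs i)), ← Finset.prod_mul_distrib]
  exact Finset.prod_le_prod (fun i _ => weakNorm_nonneg _ _)
    fun i _ => weakNorm_rpow_smul_le (hps i) (hpqs i) ha (x i)

lemma IsAbsSumming.of_le {E : Fin n → Type*} [∀ i, NormedAddCommGroup (E i)]
    [∀ i, NormedSpace 𝕜 (E i)] {p : ℝ} {ps : Fin n → ℝ} {A : ContinuousMultilinearMap 𝕜 E F}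
    (C : ℝ) (h : ∀ (m : ℕ) (x : ∀ i, Fin m → E i),
      strongNorm p (fun j => A fun i => x i j) ≤ C * ∏ i, weakNorm 𝕜 (ps i) (x i)) :
    IsAbsSumming p ps A :=
  ⟨max C 1, by positivity, fun m x => (h m x).trans <|
    mul_le_mul_of_nonneg_right (le_max_left C 1) (prod_weakNorm_nonneg ps x)⟩

lemma exists_uniform_bound_of_forall_isAbsSumming [CompleteSpace F] {E : Fin n → Type*}
    [∀ i, NormedAddCommGroup (E i)] [∀ i, NormedSpace 𝕜 (E i)] {p : ℝ} (hp : 0 < p)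
    {ps : Fin n → ℝ} (h : ∀ B : ContinuousMultilinearMap 𝕜 E F, IsAbsSumming p ps B) :
    ∃ C, 0 ≤ C ∧ ∀ (B : ContinuousMultilinearMap 𝕜 E F) (m : ℕ) (x : ∀ i, Fin m → E i),
      strongNorm p (fun j => B fun i => x i j) ≤ C * ‖B‖ * ∏ i, weakNorm 𝕜 (ps i) (x i) := by
  let Φ (a : Σ m, ∀ i, Fin m → E i) (B : ContinuousMultilinearMap 𝕜 E F) : ℝ :=
    strongNorm p fun j => B fun i => a.2 i j
  have hcont (a) : Continuous (Φ a) := by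
    have heval (j : Fin a.1) :
        Continuous fun B : ContinuousMultilinearMap 𝕜 E F => B fun i => a.2 i j :=
      continuous_eval_const _
    have hterm (j : Fin a.1) := (heval j).norm.rpow_const fun _ => .inr hp.le
    exact (continuous_finsetSum _ fun j _ => hterm j).rpow_const fun _ => .inr (by positivity)
  obtain ⟨C, hC, hbound⟩ := exists_uniform_bound_of_quasiSeminorm (𝕜 := 𝕜) (Φ := Φ)
    (w := fun a => ∏ i, weakNorm 𝕜 (ps i) (a.2 i)) (K := 2 * 2 ^ (1 / p))
    (fun a => prod_weakNorm_nonneg ps a.2) (by positivity) (fun a => (hcont a).lowerSemicontinuous)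
    (fun _ _ _ => strongNorm_sub_le hp _ _) (fun _ c _ => strongNorm_smul hp c _)
    (fun B => let ⟨C, _, hC⟩ := h B; ⟨C, fun a => hC a.1 a.2⟩)
  exact ⟨C, hC, fun B m x => hbound ⟨m, x⟩ B⟩

/- Freezing the last variable at a random sum `∑ i, ε i • x i` of norm at most `weakNorm 𝕜 1 x`
leaves an `n`-linear map; averaging over the signs `ε` recovers the diagonal terms. -/
lemma isAbsSumming_of_forall_castSucc [CompleteSpace F] {E : Fin (n + 1) → Type*}
    [∀ i, NormedAddCommGroup (E i)] [∀ i, NormedSpace 𝕜 (E i)] {p : ℝ} (hp : 0 < p)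
    {ps : Fin (n + 1) → ℝ} (hlast : ps (Fin.last n) = 1)
    (h : ∀ B : ContinuousMultilinearMap 𝕜 (fun i : Fin n => E i.castSucc) F,
      IsAbsSumming p (fun i => ps i.castSucc) B)
    (A : ContinuousMultilinearMap 𝕜 E F) : IsAbsSumming p ps A := by
  obtain ⟨C, hC, hbound⟩ := exists_uniform_bound_of_forall_isAbsSumming hp h
  let L := A.curryRight.flipLinear
  refine .of_le (2 ^ (1 / p) * (C * ‖L‖)) fun m x => ?_
  let y : Fin m → E (Fin.last n) := x (Fin.last n)
  let u (j : Fin m) (i : Fin n) : E i.castSucc := x i.castSucc j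
  let W := ∏ i : Fin n, weakNorm 𝕜 (ps i.castSucc) (x i.castSucc)
  have hW : 0 ≤ W := prod_weakNorm_nonneg _ _
  have hdiag (j) : (A fun i => x i j) = L (y j) (u j) :=
    congrArg A (Fin.snoc_init_self fun i => x i j).symm
  have hrandom (ε : Fin m → ℤˣ) :
      strongNorm p (fun j => ∑ i, ε i • L (y i) (u j)) ≤ C * ‖L‖ * (W * weakNorm 𝕜 1 y) := by
    calc strongNorm p (fun j => ∑ i, ε i • L (y i) (u j))
        = strongNorm p fun j => L (∑ i, ε i • y i) (u j) := by simp [Units.smul_def]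
      _ ≤ C * ‖L (∑ i, ε i • y i)‖ * W := hbound _ m fun i => x i.castSucc
      _ ≤ C * (‖L‖ * weakNorm 𝕜 1 y) * W := by
        gcongr
        exact L.le_opNorm_of_le (norm_sum_signs_smul_le_weakNorm_one 𝕜 ε y)
      _ = C * ‖L‖ * (W * weakNorm 𝕜 1 y) := by ring
  calc strongNorm p (fun j => A fun i => x i j) = strongNorm p fun j => L (y j) (u j) := by
        simp only [hdiag]
    _ ≤ 2 ^ (1 / p) * (C * ‖L‖ * (W * weakNorm 𝕜 1 y)) :=
        strongNorm_diag_le_of_forall_signs 𝕜 (z := fun i j => L (y i) (u j)) hp hrandom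
    _ = 2 ^ (1 / p) * (C * ‖L‖) * ∏ i, weakNorm 𝕜 (ps i) (x i) := by
        rw [Fin.prod_univ_castSucc, hlast, mul_assoc, mul_assoc, mul_assoc]

lemma isAbsSumming_of_forall_castAdd [CompleteSpace F] {k l : ℕ} {E : Fin (k + l) → Type*}
    [∀ i, NormedAddCommGroup (E i)] [∀ i, NormedSpace 𝕜 (E i)] {p : ℝ} (hp : 0 < p)
    {ps : Fin (k + l) → ℝ} (hone : ∀ i : Fin l, ps (Fin.natAdd k i) = 1)
    (h : ∀ B : ContinuousMultilinearMap 𝕜 (fun i : Fin k => E (Fin.castAdd l i)) F,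
      IsAbsSumming p (fun i => ps (Fin.castAdd l i)) B)
    (A : ContinuousMultilinearMap 𝕜 E F) : IsAbsSumming p ps A := by
  induction l with
  | zero => exact h A
  | succ l ih =>
    exact isAbsSumming_of_forall_castSucc hp (hone (Fin.last l))
      (ih (E := fun i => E i.castSucc) (fun i => hone i.castSucc) h) A

lemma norm_map_rpow_smul {ι : Type*} [Fintype ι] {E : ι → Type*} [∀ i, NormedAddCommGroup (E i)]
    [∀ i, NormedSpace 𝕜 (E i)] (A : ContinuousMultilinearMap 𝕜 E F) {a : ℝ} (ha : 0 ≤ a)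
    {β : ι → ℝ} (hβ : ∀ i, 0 ≤ β i) (x : ∀ i, E i) :
    ‖A fun i => ((a ^ β i : ℝ) : 𝕜) • x i‖ = a ^ (∑ i, β i) * ‖A x‖ := by
  rw [A.map_smul_univ, norm_smul, norm_prod, Real.rpow_sum_of_nonneg ha fun i _ => hβ i]
  simp only [RCLike.norm_ofReal, abs_of_nonneg (Real.rpow_nonneg ha _)]

/- The definition is applied to the family `a_j^(1/p_i - 1/q_i) x_j^i` with weights
`a_j = ‖A(x_j^1, …, x_j^n)‖^q`, and Hölder's inequality separates the weights on the right. -/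
theorem IsAbsSumming.inclusion {E : Fin n → Type*} [∀ i, NormedAddCommGroup (E i)]
    [∀ i, NormedSpace 𝕜 (E i)] {p q : ℝ} {ps qs : Fin n → ℝ} {A : ContinuousMultilinearMap 𝕜 E F}
    (hA : IsAbsSumming p ps A) (hp : 0 < p) (hq : 0 < q) (hps : ∀ i, 0 < ps i)
    (hpqs : ∀ i, ps i ≤ qs i) (hle : ∑ i, 1 / ps i - 1 / p ≤ ∑ i, 1 / qs i - 1 / q) :
    IsAbsSumming q qs A := by
  obtain ⟨C, hC, hbound⟩ := hA
  refine ⟨C, hC, fun m x => ?_⟩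
  let β (i : Fin n) : ℝ := 1 / ps i - 1 / qs i
  have hβ (i) : 0 ≤ β i := sub_nonneg.2 (one_div_le_one_div_of_le (hps i) (hpqs i))
  let a (j : Fin m) : ℝ := ‖A fun i => x i j‖ ^ q
  have ha (j) : 0 ≤ a j := by positivity
  let z (j : Fin m) : F := A fun i => ((a j ^ β i : ℝ) : 𝕜) • x i j
  let s : ℝ := (∑ i, β i + 1 / q)⁻¹
  have hsβ : 0 < ∑ i, β i + 1 / q :=
    add_pos_of_nonneg_of_pos (Finset.sum_nonneg fun i _ => hβ i) (by positivity)
  have hs : 0 < s := inv_pos.2 hsβ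
  have hp_le_s : p ≤ s := by
    rw [le_inv_comm₀ hp hsβ, ← one_div, Finset.sum_sub_distrib]
    linarith
  have hz (j) : ‖z j‖ = a j ^ (1 / s) := by
    have hroot : ‖A fun i => x i j‖ = a j ^ (1 / q) := by
      rw [← Real.rpow_mul (norm_nonneg _), mul_one_div_cancel hq.ne', Real.rpow_one]
    rw [norm_map_rpow_smul A (ha j) hβ, hroot,
      ← Real.rpow_add_of_nonneg (ha j) (Finset.sum_nonneg fun i _ => hβ i) (by positivity),
      one_div s, inv_inv]
  change (∑ j, a j) ^ (1 / q) ≤ C * ∏ i, weakNorm 𝕜 (qs i) (x i)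
  obtain hzero | hpos := (Finset.sum_nonneg fun j _ => ha j : 0 ≤ ∑ j, a j).eq_or_lt
  · rw [← hzero, Real.zero_rpow (by positivity)]
    exact mul_nonneg hC.le (prod_weakNorm_nonneg qs x)
  have hmain : (∑ j, a j) ^ (1 / s) ≤
      C * ((∑ j, a j) ^ (∑ i, β i) * ∏ i, weakNorm 𝕜 (qs i) (x i)) := by
    calc (∑ j, a j) ^ (1 / s) = strongNorm s z := by
          simp only [strongNorm, hz, ← Real.rpow_mul (ha _), one_div_mul_cancel hs.ne',
            Real.rpow_one]
      _ ≤ strongNorm p z := strongNorm_anti hp hp_le_s z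
      _ ≤ C * ∏ i, weakNorm 𝕜 (ps i) fun j => ((a j ^ β i : ℝ) : 𝕜) • x i j := hbound m _
      _ ≤ C * ((∑ j, a j) ^ (∑ i, β i) * ∏ i, weakNorm 𝕜 (qs i) (x i)) := by
          gcongr
          exact prod_weakNorm_rpow_smul_le hps hpqs ha x
  refine le_of_mul_le_mul_left ?_ (Real.rpow_pos_of_pos hpos (∑ i, β i))
  rwa [← Real.rpow_add hpos, mul_left_comm, ← inv_inv (∑ i, β i + 1 / q), ← one_div]

end Summing

theorem coincidence_extension_general {𝕜 : Type*} [RCLike 𝕜] {k l : ℕ} {E : Fin (k + l) → Type*}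
    [∀ i, NormedAddCommGroup (E i)] [∀ i, NormedSpace 𝕜 (E i)]
    {F : Type*} [NormedAddCommGroup F] [NormedSpace 𝕜 F] [CompleteSpace F]
    {p q : ℝ} (hp : 0 < p) (hq : 0 < q) {qs : Fin (k + l) → ℝ} (hqs0 : ∀ i, 0 < qs i)
    (hqs : ∀ i : Fin l, 1 ≤ qs (Fin.natAdd k i))
    (hcoin : ∀ B : ContinuousMultilinearMap 𝕜 (fun i : Fin k => E (Fin.castAdd l i)) F,
      IsAbsSumming p (fun i => qs (Fin.castAdd l i)) B)
    (hle : (l : ℝ) - 1 / p ≤ (∑ i : Fin l, 1 / qs (Fin.natAdd k i)) - 1 / q)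
    (A : ContinuousMultilinearMap 𝕜 E F) : IsAbsSumming q qs A := by
  let ps : Fin (k + l) → ℝ := Fin.append (fun i => qs (Fin.castAdd l i)) 1
  have hA : IsAbsSumming p ps A :=
    isAbsSumming_of_forall_castAdd hp (by simp [ps]) (by simpa [ps] using hcoin) A
  refine hA.inclusion hp hq ?_ ?_ ?_
  · exact Fin.addCases (by simp [ps, hqs0]) (by simp [ps])
  · exact Fin.addCases (by simp [ps]) (by simpa [ps] using hqs)
  · simp only [Fin.sum_univ_add, ps, Fin.append_left, Fin.append_right, Pi.one_apply, div_one,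
      Finset.sum_const, Finset.card_univ, Fintype.card_fin, nsmul_eq_mul, mul_one]
    linarith

/-- If every continuous `k`-linear map `E₁ × ⋯ × E_k → F` is absolutely
`(p; q₁, …, q_k)`-summing, `E_{k+1}, …, E_n` have cotype 2 (here `n = k + l`), `p ≤ q`,
`1 ≤ q_i ≤ 2` for `i > k`, and `∑_{i>k} 1/q_i − 1/q = (n − k) − 1/p`, then every continuous
`n`-linear map `E₁ × ⋯ × E_n → F` is absolutely `(q; q₁, …, q_n)`-summing. -/
theorem coincidence_extension {𝕜 : Type*} [RCLike 𝕜] {k l : ℕ} (hk : 1 ≤ k) (hl : 1 ≤ l)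
    (E : Fin (k + l) → Type*) [∀ i, NormedAddCommGroup (E i)] [∀ i, NormedSpace 𝕜 (E i)]
    [∀ i, CompleteSpace (E i)]
    (F : Type*) [NormedAddCommGroup F] [NormedSpace 𝕜 F] [CompleteSpace F]
    (p q : ℝ) (hp : 0 < p) (hpq : p ≤ q)
    (qs : Fin (k + l) → ℝ) (hqs0 : ∀ i, 0 < qs i)
    (hqs : ∀ i : Fin l, 1 ≤ qs (Fin.natAdd k i) ∧ qs (Fin.natAdd k i) ≤ 2)
    (hcot : ∀ i : Fin l, HasCotype2 (E (Fin.natAdd k i)))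
    (hcoin : ∀ B : ContinuousMultilinearMap 𝕜 (fun i : Fin k => E (Fin.castAdd l i)) F,
      IsAbsSumming p (fun i => qs (Fin.castAdd l i)) B)
    (heq : (∑ i : Fin l, 1 / qs (Fin.natAdd k i)) - 1 / q = (l : ℝ) - 1 / p)
    (A : ContinuousMultilinearMap 𝕜 E F) :
    IsAbsSumming q qs A :=
  coincidence_extension_general hp (hp.trans_le hpq) hqs0 (fun i => (hqs i).1) hcoin heq.ge A
end
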